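/- In the degenerate case σ = 0, ρ = 1, for every 0 < t < ∞ the following filtration relations hold: 𝔉^{(R₁,R₂)}(t) = 𝔉^V(t) = 𝔉^{X₁+X₂}(t) ⊊ 𝔉^{(X₁,X₂)}(t) = 𝔉^Y(t) = 𝔉^{X₁−X₂}(t) = 𝔉^W(t), where the middle inclusion is strict. -/

import Mathlib

open MeasureTheory ProbabilityTheory Filter Set

noncomputable section

namespace SDEPaper

/-- The signum convention of the paper: `psgn y = 1` for `y > 0`, `= -1` for `y ≤ 0`. -/
def psgn (y : ℝ) : ℝ := if 0 < y then 1 else -1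

variable {Ω : Type*} [m : MeasurableSpace Ω]

/-- The σ-algebra generated by the process `Ξ` on the time interval `[0, t]`. -/
def natSA {E : Type*} [MeasurableSpace E] (Ξ : ℝ → Ω → E) (t : ℝ) : MeasurableSpace Ω :=
  ⨆ s ∈ Icc (0 : ℝ) t, MeasurableSpace.comap (Ξ s) inferInstance

/-- The `μ`-augmentation of a σ-algebra. -/
def augSA (μ : Measure Ω) (m' : MeasurableSpace Ω) : MeasurableSpace Ω :=
  m' ⊔ MeasurableSpace.generateFrom {A : Set Ω | μ A = 0}

/-- `𝔉^Ξ(t)`: the `μ`-augmented σ-algebra generated by the process `Ξ` up to time `t`. -/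
def natFilt {E : Type*} [MeasurableSpace E] (μ : Measure Ω) (Ξ : ℝ → Ω → E) (t : ℝ) :
    MeasurableSpace Ω := augSA μ (natSA Ξ t)

/-- Dyadic left-point Riemann sum of `H` against `X` on `[0,t]`. -/
def rsum (H X : ℝ → Ω → ℝ) (t : ℝ) (n : ℕ) (ω : Ω) : ℝ :=
  ∑ i ∈ Finset.range (2 ^ n),
    H (t * i / 2 ^ n) ω * (X (t * (i + 1) / 2 ^ n) ω - X (t * i / 2 ^ n) ω)

/-- `I = ∫₀^· H dX`: dyadic Riemann sums converge in probability, and `I 0 = 0` a.s. -/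
def IsSI (μ : Measure Ω) (H X I : ℝ → Ω → ℝ) : Prop :=
  (∀ᵐ ω ∂μ, I 0 ω = 0) ∧
  ∀ t : ℝ, 0 ≤ t → TendstoInMeasure μ (fun n => rsum H X t n) atTop (I t)

/-- `I = ∫₀^· H₁ dX₁ + ∫₀^· H₂ dX₂` in the sense of convergence in probability
of dyadic Riemann sums. -/
def IsSI2 (μ : Measure Ω) (H₁ X₁ H₂ X₂ I : ℝ → Ω → ℝ) : Prop :=
  (∀ᵐ ω ∂μ, I 0 ω = 0) ∧
  ∀ t : ℝ, 0 ≤ t →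
    TendstoInMeasure μ (fun n ω => rsum H₁ X₁ t n ω + rsum H₂ X₂ t n ω) atTop (I t)

/-- Dyadic sums of products of increments. -/
def qsum (X Y : ℝ → Ω → ℝ) (t : ℝ) (n : ℕ) (ω : Ω) : ℝ :=
  ∑ i ∈ Finset.range (2 ^ n),
    (X (t * (i + 1) / 2 ^ n) ω - X (t * i / 2 ^ n) ω) *
      (Y (t * (i + 1) / 2 ^ n) ω - Y (t * i / 2 ^ n) ω)

/-- `C = ⟨X,Y⟩`: the quadratic covariation, as a limit in probability of dyadic sums. -/
def IsQV (μ : Measure Ω) (X Y C : ℝ → Ω → ℝ) : Prop :=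
  ∀ t : ℝ, 0 ≤ t → TendstoInMeasure μ (fun n => qsum X Y t n) atTop (C t)

/-- `W` is a standard one-dimensional Brownian motion with respect to the family of
σ-algebras `F` (a filtration contained in the ambient σ-algebra). -/
structure IsBM (μ : Measure Ω) (F : ℝ → MeasurableSpace Ω) (W : ℝ → Ω → ℝ) : Prop where
  le : ∀ t : ℝ, F t ≤ m
  mono : Monotone F
  adapted : ∀ t : ℝ, 0 ≤ t → MeasurableSpace.comap (W t) inferInstance ≤ F t
  init : ∀ᵐ ω ∂μ, W 0 ω = 0
  cont : ∀ᵐ ω ∂μ, Continuous fun t => W t ω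
  law : ∀ s t : ℝ, 0 ≤ s → s ≤ t →
    μ.map (fun ω => W t ω - W s ω) = gaussianReal 0 ((t - s).toNNReal)
  indep : ∀ s t : ℝ, 0 ≤ s → s ≤ t →
    Indep (MeasurableSpace.comap (fun ω => W t ω - W s ω) inferInstance) (F s) μ

/-- `(B₁, B₂)` is a planar Brownian motion: two independent standard Brownian motions
with respect to the common filtration `F`. -/
def IsPlanarBM (μ : Measure Ω) (F : ℝ → MeasurableSpace Ω) (B₁ B₂ : ℝ → Ω → ℝ) : Prop :=
  IsBM μ F B₁ ∧ IsBM μ F B₂ ∧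
    IndepFun (fun ω => (fun t => B₁ t ω)) (fun ω => (fun t => B₂ t ω)) μ

/-- `L` is the (right) local time at the origin of the process `Y`:
`L t = lim_{ε ↓ 0} (4ε)⁻¹ ∫₀ᵗ 1{|Y(s)| < ε} ds`. -/
def IsLocalTime (μ : Measure Ω) (Y L : ℝ → Ω → ℝ) : Prop :=
  ∀ᵐ ω ∂μ, ∀ t : ℝ, 0 ≤ t →
    Tendsto (fun ε : ℝ =>
        (4 * ε)⁻¹ * ∫ s in (0:ℝ)..t, (if |Y s ω| < ε then (1:ℝ) else 0))
      (nhdsWithin 0 (Ioi 0)) (nhds (L t ω))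

/-- A continuous local martingale with respect to the filtration `F`. -/
def IsContLocMart (μ : Measure Ω) (F : Filtration ℝ m) (M : ℝ → Ω → ℝ) : Prop :=
  (∀ᵐ ω ∂μ, Continuous fun t => M t ω) ∧ StronglyAdapted F M ∧
    ∃ τ : ℕ → Ω → ℝ, (∀ n, IsStoppingTime F (fun ω => (τ n ω : WithTop ℝ))) ∧
      (∀ᵐ ω ∂μ, Tendsto (fun n => τ n ω) atTop atTop) ∧
      ∀ n, Martingale (fun t ω => M (min t (τ n ω)) ω) F μ

/-- Orthogonality: the cross-variation `⟨M,N⟩` vanishes identically. -/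
def Orthogonal (μ : Measure Ω) (M N : ℝ → Ω → ℝ) : Prop :=
  IsQV μ M N fun _ _ => 0

/-- Domination: `⟨M⟩(t) = ∫₀ᵗ q(s) d⟨N⟩(s)` for a progressively measurable
process `q` with values in `[0,c]`. -/
def Dominated (μ : Measure Ω) (F : Filtration ℝ m) (M N : ℝ → Ω → ℝ) (c : ℝ) : Prop :=
  ∃ QM QN q : ℝ → Ω → ℝ, IsQV μ M M QM ∧ IsQV μ N N QN ∧
    ProgMeasurable F q ∧ (∀ t ω, q t ω ∈ Icc (0:ℝ) c) ∧
    ∀ᵐ ω ∂μ, ∃ ν : Measure ℝ,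
      (∀ a b : ℝ, 0 ≤ a → a ≤ b → ν (Ioc a b) = ENNReal.ofReal (QN b ω - QN a ω)) ∧
      ∀ t : ℝ, 0 ≤ t → QM t ω = ∫ s in Ioc (0:ℝ) t, q s ω ∂ν

/-- The law of the two-dimensional process `(X₁, X₂)` on path space. -/
def pathLaw (μ : Measure Ω) (X₁ X₂ : ℝ → Ω → ℝ) : Measure (ℝ → ℝ × ℝ) :=
  μ.map fun ω => (fun t => (X₁ t ω, X₂ t ω))
/-- `(X₁, X₂)` solves the system (1.1)-(1.2) driven by `(B₁, B₂)`. -/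
def Solves11 (μ : Measure Ω) (F : ℝ → MeasurableSpace Ω) (g h ρ σ x₁ x₂ : ℝ)
    (B₁ B₂ X₁ X₂ : ℝ → Ω → ℝ) : Prop :=
  (∀ t : ℝ, 0 ≤ t →
    MeasurableSpace.comap (fun ω => (X₁ t ω, X₂ t ω)) inferInstance ≤ F t) ∧
  (∀ᵐ ω ∂μ, Continuous (fun t => X₁ t ω) ∧ Continuous (fun t => X₂ t ω)) ∧
  ∃ I₁ I₂ : ℝ → Ω → ℝ,
    IsSI μ (fun s ω => if X₁ s ω ≤ X₂ s ω then σ else ρ) B₁ I₁ ∧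
    IsSI μ (fun s ω => if X₁ s ω ≤ X₂ s ω then ρ else σ) B₂ I₂ ∧
    ∀ᵐ ω ∂μ, ∀ t : ℝ, 0 ≤ t →
      X₁ t ω = x₁ + (∫ s in (0:ℝ)..t, (if X₁ s ω ≤ X₂ s ω then g else -h)) + I₁ t ω ∧
      X₂ t ω = x₂ + (∫ s in (0:ℝ)..t, (if X₁ s ω ≤ X₂ s ω then -h else g)) + I₂ t ω

/-- `(X₁, X₂)` solves the system (4.7)-(4.8), driven by the single Brownian motion `W`. -/
def Solves47 (μ : Measure Ω) (F : ℝ → MeasurableSpace Ω) (g h x₁ x₂ : ℝ)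
    (W X₁ X₂ : ℝ → Ω → ℝ) : Prop :=
  (∀ t : ℝ, 0 ≤ t →
    MeasurableSpace.comap (fun ω => (X₁ t ω, X₂ t ω)) inferInstance ≤ F t) ∧
  (∀ᵐ ω ∂μ, Continuous (fun t => X₁ t ω) ∧ Continuous (fun t => X₂ t ω)) ∧
  ∃ I₁ I₂ : ℝ → Ω → ℝ,
    IsSI μ (fun s ω => if X₁ s ω ≤ X₂ s ω then (0:ℝ) else 1) W I₁ ∧
    IsSI μ (fun s ω => if X₁ s ω ≤ X₂ s ω then (-1:ℝ) else 0) W I₂ ∧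
    ∀ᵐ ω ∂μ, ∀ t : ℝ, 0 ≤ t →
      X₁ t ω = x₁ + (∫ s in (0:ℝ)..t, (if X₁ s ω ≤ X₂ s ω then g else -h)) + I₁ t ω ∧
      X₂ t ω = x₂ + (∫ s in (0:ℝ)..t, (if X₁ s ω ≤ X₂ s ω then -h else g)) + I₂ t ω

/-- `(X₁, X₂)` solves the system (4.9)-(4.10), driven by the single Brownian motion `V`. -/
def Solves49 (μ : Measure Ω) (F : ℝ → MeasurableSpace Ω) (g h x₁ x₂ : ℝ)
    (V X₁ X₂ : ℝ → Ω → ℝ) : Prop :=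
  (∀ t : ℝ, 0 ≤ t →
    MeasurableSpace.comap (fun ω => (X₁ t ω, X₂ t ω)) inferInstance ≤ F t) ∧
  (∀ᵐ ω ∂μ, Continuous (fun t => X₁ t ω) ∧ Continuous (fun t => X₂ t ω)) ∧
  ∃ I₁ I₂ : ℝ → Ω → ℝ,
    IsSI μ (fun s ω => if X₁ s ω ≤ X₂ s ω then (0:ℝ) else 1) V I₁ ∧
    IsSI μ (fun s ω => if X₁ s ω ≤ X₂ s ω then (1:ℝ) else 0) V I₂ ∧
    ∀ᵐ ω ∂μ, ∀ t : ℝ, 0 ≤ t →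
      X₁ t ω = x₁ + (∫ s in (0:ℝ)..t, (if X₁ s ω ≤ X₂ s ω then g else -h)) + I₁ t ω ∧
      X₂ t ω = x₂ + (∫ s in (0:ℝ)..t, (if X₁ s ω ≤ X₂ s ω then -h else g)) + I₂ t ω

/-- `(X₁, X₂)` solves the system (2.12)-(2.13), driven by the planar BM `(W₁, W₂)`. -/
def Solves212 (μ : Measure Ω) (F : ℝ → MeasurableSpace Ω) (g h ρ σ x₁ x₂ : ℝ)
    (W₁ W₂ X₁ X₂ : ℝ → Ω → ℝ) : Prop :=
  (∀ t : ℝ, 0 ≤ t →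
    MeasurableSpace.comap (fun ω => (X₁ t ω, X₂ t ω)) inferInstance ≤ F t) ∧
  (∀ᵐ ω ∂μ, Continuous (fun t => X₁ t ω) ∧ Continuous (fun t => X₂ t ω)) ∧
  ∃ I₁ I₂ : ℝ → Ω → ℝ,
    IsSI2 μ (fun s ω => if X₁ s ω ≤ X₂ s ω then 0 else ρ) W₁
            (fun s ω => if X₁ s ω ≤ X₂ s ω then σ else 0) W₂ I₁ ∧
    IsSI2 μ (fun s ω => if X₁ s ω ≤ X₂ s ω then -ρ else 0) W₁
            (fun s ω => if X₁ s ω ≤ X₂ s ω then 0 else -σ) W₂ I₂ ∧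
    ∀ᵐ ω ∂μ, ∀ t : ℝ, 0 ≤ t →
      X₁ t ω = x₁ + (∫ s in (0:ℝ)..t, (if X₁ s ω ≤ X₂ s ω then g else -h)) + I₁ t ω ∧
      X₂ t ω = x₂ + (∫ s in (0:ℝ)..t, (if X₁ s ω ≤ X₂ s ω then -h else g)) + I₂ t ω

/-- `(X₁, X₂)` solves the system (2.14)-(2.15), driven by the planar BM `(V₁, V₂)`. -/
def Solves214 (μ : Measure Ω) (F : ℝ → MeasurableSpace Ω) (g h ρ σ x₁ x₂ : ℝ)
    (V₁ V₂ X₁ X₂ : ℝ → Ω → ℝ) : Prop :=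
  (∀ t : ℝ, 0 ≤ t →
    MeasurableSpace.comap (fun ω => (X₁ t ω, X₂ t ω)) inferInstance ≤ F t) ∧
  (∀ᵐ ω ∂μ, Continuous (fun t => X₁ t ω) ∧ Continuous (fun t => X₂ t ω)) ∧
  ∃ I₁ I₂ : ℝ → Ω → ℝ,
    IsSI2 μ (fun s ω => if X₁ s ω ≤ X₂ s ω then 0 else ρ) V₁
            (fun s ω => if X₁ s ω ≤ X₂ s ω then σ else 0) V₂ I₁ ∧
    IsSI2 μ (fun s ω => if X₁ s ω ≤ X₂ s ω then ρ else 0) V₁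
            (fun s ω => if X₁ s ω ≤ X₂ s ω then 0 else σ) V₂ I₂ ∧
    ∀ᵐ ω ∂μ, ∀ t : ℝ, 0 ≤ t →
      X₁ t ω = x₁ + (∫ s in (0:ℝ)..t, (if X₁ s ω ≤ X₂ s ω then g else -h)) + I₁ t ω ∧
      X₂ t ω = x₂ + (∫ s in (0:ℝ)..t, (if X₁ s ω ≤ X₂ s ω then -h else g)) + I₂ t ω

/-- `(X₁, X₂)` solves the system `dX = Σ(X) dU + G(X) dt` of (eq:xSigma), where
`Σ(x) = Σ₊ 1{x₁ > x₂} + Σ₋ 1{x₁ ≤ x₂}`. -/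
def SolvesGen (μ : Measure Ω) (F : ℝ → MeasurableSpace Ω) (g h : ℝ)
    (Sp Sm : Matrix (Fin 2) (Fin 2) ℝ) (x₁ x₂ : ℝ)
    (U₁ U₂ X₁ X₂ : ℝ → Ω → ℝ) : Prop :=
  (∀ t : ℝ, 0 ≤ t →
    MeasurableSpace.comap (fun ω => (X₁ t ω, X₂ t ω)) inferInstance ≤ F t) ∧
  (∀ᵐ ω ∂μ, Continuous (fun t => X₁ t ω) ∧ Continuous (fun t => X₂ t ω)) ∧
  ∃ I₁ I₂ : ℝ → Ω → ℝ,
    IsSI2 μ (fun s ω => if X₁ s ω ≤ X₂ s ω then Sm 0 0 else Sp 0 0) U₁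
            (fun s ω => if X₁ s ω ≤ X₂ s ω then Sm 0 1 else Sp 0 1) U₂ I₁ ∧
    IsSI2 μ (fun s ω => if X₁ s ω ≤ X₂ s ω then Sm 1 0 else Sp 1 0) U₁
            (fun s ω => if X₁ s ω ≤ X₂ s ω then Sm 1 1 else Sp 1 1) U₂ I₂ ∧
    ∀ᵐ ω ∂μ, ∀ t : ℝ, 0 ≤ t →
      X₁ t ω = x₁ + (∫ s in (0:ℝ)..t, (if X₁ s ω ≤ X₂ s ω then g else -h)) + I₁ t ω ∧
      X₂ t ω = x₂ + (∫ s in (0:ℝ)..t, (if X₁ s ω ≤ X₂ s ω then -h else g)) + I₂ t ω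

/-!
The difference `Y = X₁ - X₂` solves `dY = -κ sgn(Y) dt + dW` with `κ = g + h`. Its drift is
decreasing, so `Y` is the limit of an explicit Euler scheme in `W`; hence `Y` and `W` generate the
same filtration. Since `Y` spends no time at `0`, `V = ∫ sgn(Y) dW` is, up to a deterministic
function, the sum `X₁ + X₂`.

By Tanaka's formula `|Y|` is the Skorokhod reflection of `|y| - κ t + V(t)` and hence a functional
of `V`, and so are `max` and `min`, the halves of the sum plus and minus `|Y|`.

For the strictness, reflect `W` at the first zero of `Y`. This gives another Brownian motion, whose
solution is `Y` reflected at that zero and whose `V` is unchanged. Since `Y` reaches `0` before `t`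
with positive probability, the event `{Y(t) > 0}` is not determined by `V`.
-/

section CompleteSigmaAlgebras

variable {Ω E : Type*} {𝒢 mΩ : MeasurableSpace Ω} [MeasurableSpace E] {μ : Measure Ω}

/-- The σ-algebra `𝒢` is complete relative to `μ`: it contains every `μ`-null set, whether or not
that set belongs to the ambient σ-algebra. The σ-algebras `natFilt μ Ξ t` are the smallest such. -/
def ContainsNullSets (μ : Measure Ω) (𝒢 : MeasurableSpace Ω) : Prop :=
  ∀ A : Set Ω, μ A = 0 → MeasurableSet[𝒢] A

lemma ContainsNullSets.measurable_of_ae_eq (h𝒢 : ContainsNullSets μ 𝒢) {f g : Ω → E}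
    (hf : Measurable[𝒢] f) (hfg : f =ᵐ[μ] g) : Measurable[𝒢] g := by
  intro B hB
  have hN : μ {ω | ¬ f ω = g ω} = 0 := hfg
  have hsplit : g ⁻¹' B =
      (f ⁻¹' B ∩ {ω | ¬ f ω = g ω}ᶜ) ∪ (g ⁻¹' B ∩ {ω | ¬ f ω = g ω}) := by
    ext ω
    by_cases h : f ω = g ω <;> simp [h]
  rw [hsplit]
  exact ((hf hB).inter (h𝒢 _ hN).compl).union (h𝒢 _ (measure_mono_null inter_subset_right hN))

lemma ContainsNullSets.measurable_of_tendsto_ae (h𝒢 : ContainsNullSets μ 𝒢)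
    {f : ℕ → Ω → ℝ} {g : Ω → ℝ} (hf : ∀ n, Measurable[𝒢] (f n))
    (hfg : ∀ᵐ ω ∂μ, Tendsto (fun n => f n ω) atTop (nhds (g ω))) : Measurable[𝒢] g := by
  refine h𝒢.measurable_of_ae_eq (Measurable.limsup hf) ?_
  filter_upwards [hfg] with ω hω using hω.limsup_eq

lemma ContainsNullSets.measurable_of_tendstoInMeasure (h𝒢 : ContainsNullSets μ 𝒢)
    {f : ℕ → Ω → ℝ} {g : Ω → ℝ} (hf : ∀ n, Measurable[𝒢] (f n))
    (hfg : TendstoInMeasure μ f atTop g) : Measurable[𝒢] g := by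
  obtain ⟨ns, -, hns⟩ := hfg.exists_seq_tendsto_ae
  exact h𝒢.measurable_of_tendsto_ae (fun n => hf (ns n)) hns

lemma containsNullSets_natFilt (μ : Measure Ω) (Ξ : ℝ → Ω → E) (t : ℝ) :
    ContainsNullSets μ (natFilt μ Ξ t) := fun _ hA =>
  (le_sup_right : MeasurableSpace.generateFrom {A | μ A = 0} ≤ natFilt μ Ξ t) _
    (MeasurableSpace.measurableSet_generateFrom hA)

lemma measurable_natFilt (μ : Measure Ω) (Ξ : ℝ → Ω → E) {s t : ℝ} (hs : s ∈ Icc 0 t) :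
    Measurable[natFilt μ Ξ t] (Ξ s) := by
  refine measurable_iff_comap_le.mpr (le_trans ?_ (le_sup_left : natSA Ξ t ≤ natFilt μ Ξ t))
  exact le_iSup₂ (f := fun s (_ : s ∈ Icc (0 : ℝ) t) => MeasurableSpace.comap (Ξ s) _) s hs

lemma natFilt_mono (μ : Measure Ω) (Ξ : ℝ → Ω → E) : Monotone (natFilt μ Ξ) := fun _ _ hst =>
  sup_le_sup_right (biSup_mono fun _ hr => ⟨hr.1, hr.2.trans hst⟩) _

lemma natFilt_le {Ξ : ℝ → Ω → E} {t : ℝ} (h𝒢 : ContainsNullSets μ 𝒢)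
    (hΞ : ∀ s ∈ Icc 0 t, Measurable[𝒢] (Ξ s)) : natFilt μ Ξ t ≤ 𝒢 :=
  sup_le (iSup₂_le fun s hs => (hΞ s hs).comap_le) (MeasurableSpace.generateFrom_le h𝒢)

lemma natFilt_le_natFilt {E' : Type*} [MeasurableSpace E'] {Ξ : ℝ → Ω → E} {Ψ : ℝ → Ω → E'}
    (hΞ : ∀ s, 0 ≤ s → Measurable[natFilt μ Ψ s] (Ξ s)) (t : ℝ) :
    natFilt μ Ξ t ≤ natFilt μ Ψ t :=
  natFilt_le (containsNullSets_natFilt μ Ψ t) fun s hs =>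
    (hΞ s hs.1).mono (natFilt_mono μ Ψ hs.2) le_rfl

end CompleteSigmaAlgebras

section Signum

lemma measurable_psgn : Measurable psgn :=
  Measurable.ite measurableSet_Ioi measurable_const measurable_const

lemma abs_psgn (x : ℝ) : |psgn x| = 1 := by
  unfold psgn; split_ifs <;> simp

lemma psgn_mul_psgn (x : ℝ) : psgn x * psgn x = 1 := by
  unfold psgn; split_ifs <;> simp

lemma psgn_mul_self (x : ℝ) : psgn x * x = |x| := by
  unfold psgn; split_ifs with h
  · simp [abs_of_pos h]
  · simp [abs_of_nonpos (not_lt.mp h)]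

lemma psgn_neg {x : ℝ} (hx : x ≠ 0) : psgn (-x) = -psgn x := by
  rcases lt_or_gt_of_ne hx with h | h <;> simp [psgn, h, not_lt.mpr h.le]

lemma mul_psgn_sub_psgn_nonneg (x y : ℝ) : 0 ≤ (x - y) * (psgn x - psgn y) := by
  unfold psgn; split_ifs <;> nlinarith

lemma abs_psgn_sub_psgn_le (x y : ℝ) : |psgn x - psgn y| ≤ 2 := by
  unfold psgn; split_ifs <;> norm_num

lemma continuousAt_psgn {x : ℝ} (hx : x ≠ 0) : ContinuousAt psgn x := by
  refine tendsto_const_nhds.congr' ?_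
  rcases lt_or_gt_of_ne hx with h | h
  · filter_upwards [gt_mem_nhds h] with y hy
    simp [psgn, not_lt.mpr h.le, not_lt.mpr hy.le]
  · filter_upwards [lt_mem_nhds h] with y hy
    simp [psgn, h, hy]

lemma intervalIntegrable_psgn {Y : ℝ → ℝ} (hY : Continuous Y) (a b : ℝ) :
    IntervalIntegrable (fun s => psgn (Y s)) volume a b :=
  (intervalIntegrable_const (c := (1 : ℝ))).mono_fun
    (measurable_psgn.comp hY.measurable).aestronglyMeasurable
    (Eventually.of_forall fun s => by simp [abs_psgn])

end Signum

section BangBangPaths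

lemma tendsto_div_two_pow (T : ℝ) : Tendsto (fun n : ℕ => T / (2 : ℝ) ^ n) atTop (nhds 0) :=
  tendsto_const_nhds.div_atTop (tendsto_pow_atTop_atTop_of_one_lt one_lt_two)

/-- `Y` is a continuous solution, on `[0, ∞)`, of the integral equation
`Y(t) = y - κ ∫₀ᵗ sgn(Y(s)) ds + w(t)` with bang-bang drift, driven by a path `w` started at `0`. -/
structure IsBangBangPath (κ y : ℝ) (w Y : ℝ → ℝ) : Prop where
  driver_zero : w 0 = 0
  continuous : Continuous Y
  eq : ∀ t : ℝ, 0 ≤ t → Y t = y - κ * (∫ s in (0 : ℝ)..t, psgn (Y s)) + w t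

namespace IsBangBangPath

variable {κ y : ℝ} {w Y : ℝ → ℝ}

lemma initial (hY : IsBangBangPath κ y w Y) : Y 0 = y := by
  simp [hY.eq 0 le_rfl, hY.driver_zero]

lemma sub_eq (hY : IsBangBangPath κ y w Y) {a b : ℝ} (ha : 0 ≤ a) (hab : a ≤ b) :
    Y b - Y a = -κ * (∫ s in a..b, psgn (Y s)) + (w b - w a) := by
  rw [hY.eq b (ha.trans hab), hY.eq a ha, ← intervalIntegral.integral_add_adjacent_intervals
    (intervalIntegrable_psgn hY.continuous 0 a) (intervalIntegrable_psgn hY.continuous a b)]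
  ring

lemma abs_sub_sub_le (hY : IsBangBangPath κ y w Y) (hκ : 0 ≤ κ) {a b : ℝ} (ha : 0 ≤ a)
    (hab : a ≤ b) : |Y b - Y a - (w b - w a)| ≤ κ * (b - a) := by
  have hint : ‖∫ s in a..b, psgn (Y s)‖ ≤ 1 * |b - a| :=
    intervalIntegral.norm_integral_le_of_norm_le_const fun s _ => (abs_psgn _).le
  rw [Real.norm_eq_abs, abs_of_nonneg (sub_nonneg.mpr hab), one_mul] at hint
  rw [hY.sub_eq ha hab, add_sub_cancel_right, abs_mul, abs_neg, abs_of_nonneg hκ]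
  exact mul_le_mul_of_nonneg_left hint hκ

end IsBangBangPath

/-- The Euler scheme with mesh `δ` for the equation of `IsBangBangPath`: `eulerScheme κ y δ w k`
approximates the value of the solution at time `δ * k`. -/
def eulerScheme (κ y δ : ℝ) (w : ℝ → ℝ) : ℕ → ℝ
  | 0 => y
  | k + 1 => eulerScheme κ y δ w k - κ * δ * psgn (eulerScheme κ y δ w k)
      + (w (δ * ↑(k + 1)) - w (δ * k))

lemma measurable_eulerScheme {Ω : Type*} {_ : MeasurableSpace Ω} {κ y δ : ℝ} {W : ℝ → Ω → ℝ} {k : ℕ}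
    (hW : ∀ j ≤ k, Measurable (W (δ * j))) :
    Measurable fun ω => eulerScheme κ y δ (fun u => W u ω) k := by
  induction k with
  | zero => exact measurable_const
  | succ k ih =>
    have hk := ih fun j hj => hW j (hj.trans k.le_succ)
    exact (hk.sub ((measurable_psgn.comp hk).const_mul _)).add
      ((hW _ le_rfl).sub (hW k k.le_succ))

namespace IsBangBangPath

variable {κ y : ℝ} {w Y : ℝ → ℝ}

lemma neg_le_mul_integral_psgn_sub (hY : IsBangBangPath κ y w Y) {a b η : ℝ} (e : ℝ)
    (hab : a ≤ b) (hη : ∀ s ∈ Icc a b, |Y a - Y s| ≤ η) :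
    -(2 * η) * (b - a) ≤ (Y a - e) * ∫ s in a..b, (psgn (Y s) - psgn e) := by
  have hpointwise : ∀ s ∈ Icc a b, -(2 * η) ≤ (Y a - e) * (psgn (Y s) - psgn e) := by
    intro s hs
    have hmono := mul_psgn_sub_psgn_nonneg (Y s) e
    have hosc : |(Y a - Y s) * (psgn (Y s) - psgn e)| ≤ η * 2 := by
      rw [abs_mul]
      exact mul_le_mul (hη s hs) (abs_psgn_sub_psgn_le _ _) (abs_nonneg _)
        ((abs_nonneg _).trans (hη s hs))
    linarith [(abs_le.mp hosc).1]
  have hint := intervalIntegral.integral_mono_on hab (by simp)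
    (((intervalIntegrable_psgn hY.continuous a b).sub (by simp)).const_mul _) hpointwise
  rw [intervalIntegral.integral_const, intervalIntegral.integral_const_mul, smul_eq_mul] at hint
  linarith

-- The drift `-κ sgn` is decreasing, so a step never increases the error beyond the oscillation `η`.
lemma sub_eulerStep_sq_le (hY : IsBangBangPath κ y w Y) (hκ : 0 ≤ κ) {a b η : ℝ} (e : ℝ)
    (ha : 0 ≤ a) (hab : a ≤ b) (hη : ∀ s ∈ Icc a b, |Y a - Y s| ≤ η) :
    (Y b - (e - κ * (b - a) * psgn e + (w b - w a))) ^ 2 ≤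
      (Y a - e) ^ 2 + (4 * κ * (b - a) * η + 4 * κ ^ 2 * (b - a) ^ 2) := by
  set q := ∫ s in a..b, (psgn (Y s) - psgn e) with hq
  have hq_lower := hY.neg_le_mul_integral_psgn_sub e hab hη
  have hq_sq : q ^ 2 ≤ (2 * (b - a)) ^ 2 := by
    have hq_abs : ‖q‖ ≤ 2 * |b - a| :=
      intervalIntegral.norm_integral_le_of_norm_le_const fun s _ => abs_psgn_sub_psgn_le _ _
    rw [Real.norm_eq_abs, abs_of_nonneg (sub_nonneg.mpr hab)] at hq_abs
    exact sq_le_sq' (abs_le.mp hq_abs).1 (abs_le.mp hq_abs).2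
  have hq_eq : q = (∫ s in a..b, psgn (Y s)) - (b - a) * psgn e := by
    rw [hq, intervalIntegral.integral_sub (intervalIntegrable_psgn hY.continuous a b) (by simp)]
    simp
  have herror : Y b - (e - κ * (b - a) * psgn e + (w b - w a)) = (Y a - e) - κ * q := by
    rw [hq_eq]; linarith [hY.sub_eq ha hab]
  rw [herror]
  nlinarith [mul_le_mul_of_nonneg_left hq_lower hκ, mul_le_mul_of_nonneg_left hq_sq (sq_nonneg κ)]

lemma sub_eulerScheme_sq_le (hY : IsBangBangPath κ y w Y) (hκ : 0 ≤ κ) {δ η : ℝ} (hδ : 0 ≤ δ)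
    {N : ℕ} (hη : ∀ r s, 0 ≤ r → r ≤ s → s ≤ δ * N → s ≤ r + δ → |Y r - Y s| ≤ η) :
    (Y (δ * N) - eulerScheme κ y δ w N) ^ 2 ≤ N * (4 * κ * δ * η + 4 * κ ^ 2 * δ ^ 2) := by
  induction N with
  | zero => simp [eulerScheme, hY.initial]
  | succ k ih =>
    have hmesh : δ * ↑(k + 1) - δ * k = δ := by push_cast; ring
    have hle : δ * k ≤ δ * ↑(k + 1) := by linarith
    have hprev := ih fun r s hr hrs hs hsr => hη r s hr hrs (hs.trans hle) hsr
    have hstep := hY.sub_eulerStep_sq_le hκ (eulerScheme κ y δ w k) (η := η)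
      (by positivity : 0 ≤ δ * (k : ℝ)) hle
      fun s hs => hη _ s (by positivity) hs.1 hs.2 (by linarith [hs.2])
    rw [hmesh] at hstep
    rw [eulerScheme]
    push_cast at hstep ⊢
    linarith

lemma eventually_sub_eulerScheme_sq_le (hY : IsBangBangPath κ y w Y) (hκ : 0 ≤ κ) {T η : ℝ}
    (hT : 0 ≤ T) (hη : 0 < η) :
    ∀ᶠ n : ℕ in atTop, (Y T - eulerScheme κ y (T / 2 ^ n) w (2 ^ n)) ^ 2 ≤
      4 * κ * T * η + 4 * κ ^ 2 * T * (T / 2 ^ n) := by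
  obtain ⟨δ, hδ, hYδ⟩ := Metric.uniformContinuousOn_iff.mp
    (isCompact_Icc.uniformContinuousOn_of_continuous (hY.continuous.continuousOn (s := Icc 0 T)))
    η hη
  filter_upwards [(tendsto_div_two_pow T).eventually (gt_mem_nhds hδ)] with n hn
  have hTn : T / 2 ^ n * ((2 ^ n : ℕ) : ℝ) = T := by push_cast; field_simp
  have herror := hY.sub_eulerScheme_sq_le hκ (by positivity : 0 ≤ T / 2 ^ n) (N := 2 ^ n)
    (η := η) fun r s hr hrs hs hsr => by
      rw [hTn] at hs
      refine (hYδ r ⟨hr, hrs.trans hs⟩ s ⟨hr.trans hrs, hs⟩ ?_).le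
      rw [dist_comm, Real.dist_eq, abs_of_nonneg (sub_nonneg.mpr hrs)]
      linarith
  rw [hTn] at herror
  refine herror.trans (le_of_eq ?_)
  push_cast
  field_simp

lemma tendsto_eulerScheme (hY : IsBangBangPath κ y w Y) (hκ : 0 ≤ κ) {T : ℝ} (hT : 0 ≤ T) :
    Tendsto (fun n : ℕ => eulerScheme κ y (T / 2 ^ n) w (2 ^ n)) atTop (nhds (Y T)) := by
  have hsq : Tendsto (fun n : ℕ => (Y T - eulerScheme κ y (T / 2 ^ n) w (2 ^ n)) ^ 2) atTop
      (nhds 0) := by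
    refine tendsto_order.2 ⟨fun a ha => Eventually.of_forall fun n => ha.trans_le (sq_nonneg _),
      fun ε hε => ?_⟩
    have hlim : Tendsto (fun n : ℕ => 4 * κ * T * (ε / (4 * κ * T + 1)) +
        4 * κ ^ 2 * T * (T / 2 ^ n)) atTop (nhds (4 * κ * T * (ε / (4 * κ * T + 1)))) := by
      simpa using tendsto_const_nhds.add ((tendsto_div_two_pow T).const_mul (4 * κ ^ 2 * T))
    have hlt : 4 * κ * T * (ε / (4 * κ * T + 1)) < ε := by
      rw [mul_div_assoc', div_lt_iff₀ (by positivity)]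
      nlinarith
    have hη : 0 < ε / (4 * κ * T + 1) := by positivity
    filter_upwards [hY.eventually_sub_eulerScheme_sq_le hκ hT hη,
      hlim.eventually (gt_mem_nhds hlt)] with n h₁ h₂ using h₁.trans_lt h₂
  have hsub : Tendsto (fun n : ℕ => Y T - eulerScheme κ y (T / 2 ^ n) w (2 ^ n)) atTop (nhds 0) :=
    (tendsto_zero_iff_abs_tendsto_zero _).mpr (by simpa [Real.sqrt_sq_eq_abs, Function.comp_def]
      using hsq.sqrt)
  simpa using (tendsto_const_nhds (x := Y T)).sub hsub

end IsBangBangPath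

end BangBangPaths

section BrownianMotion

variable {Ω E : Type*} {mΩ : MeasurableSpace Ω} [MeasurableSpace E] {μ : Measure Ω}
  {F : ℝ → MeasurableSpace Ω} {W : ℝ → Ω → ℝ} {s t : ℝ}

namespace IsBM

lemma measurable_of_le (hW : IsBM μ F W) (hs : 0 ≤ s) (hst : s ≤ t) : Measurable[F t] (W s) :=
  measurable_iff_comap_le.mpr ((hW.adapted s hs).trans (hW.mono hst))

lemma measurable (hW : IsBM μ F W) (hs : 0 ≤ s) : Measurable (W s) :=
  (hW.measurable_of_le hs le_rfl).mono (hW.le s) le_rfl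

lemma measurable_sub (hW : IsBM μ F W) (hs : 0 ≤ s) (hst : s ≤ t) :
    Measurable fun ω => W t ω - W s ω :=
  (hW.measurable (hs.trans hst)).sub (hW.measurable hs)

lemma indepFun_sub (hW : IsBM μ F W) (hs : 0 ≤ s) (hst : s ≤ t) {Z : Ω → E}
    (hZ : Measurable[F s] Z) : IndepFun Z (fun ω => W t ω - W s ω) μ :=
  (IndepFun_iff_Indep _ _ _).mpr (indep_of_indep_of_le_left (hW.indep s t hs hst).symm hZ.comap_le)

end IsBM

lemma gaussianReal_Icc_le (m : ℝ) {v : NNReal} (hv : v ≠ 0) (a b : ℝ) :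
    gaussianReal m v (Icc a b) ≤ ENNReal.ofReal ((√(2 * Real.pi * v))⁻¹ * (b - a)) := by
  have hpdf : ∀ z, gaussianPDF m v z ≤ ENNReal.ofReal (√(2 * Real.pi * v))⁻¹ := fun z =>
    ENNReal.ofReal_le_ofReal <| mul_le_of_le_one_right (by positivity) <|
      Real.exp_le_one_iff.mpr <| div_nonpos_of_nonpos_of_nonneg
        (neg_nonpos.mpr (sq_nonneg _)) (by positivity)
  rw [gaussianReal_of_var_ne_zero _ hv, withDensity_apply _ measurableSet_Icc]
  calc ∫⁻ z in Icc a b, gaussianPDF m v z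
      ≤ ∫⁻ _ in Icc a b, ENNReal.ofReal (√(2 * Real.pi * v))⁻¹ := lintegral_mono hpdf
    _ = ENNReal.ofReal ((√(2 * Real.pi * v))⁻¹ * (b - a)) := by
        rw [setLIntegral_const, Real.volume_Icc, ← ENNReal.ofReal_mul (by positivity)]

lemma IsBM.measure_abs_add_sub_le [IsProbabilityMeasure μ] (hW : IsBM μ F W) (hs : 0 ≤ s)
    (hst : s < t) {Z : Ω → ℝ} (hZ : Measurable[F s] Z) (c : ℝ) :
    μ {ω | |Z ω + (W t ω - W s ω)| ≤ c} ≤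
      ENNReal.ofReal ((√(2 * Real.pi * (t - s)))⁻¹ * (2 * c)) := by
  have hZm : Measurable Z := hZ.mono (hW.le s) le_rfl
  have hWm := hW.measurable_sub hs hst.le
  have hjoint := (indepFun_iff_map_prod_eq_prod_map_map hZm.aemeasurable hWm.aemeasurable).mp
    (hW.indepFun_sub hs hst.le hZ)
  rw [hW.law s t hs hst.le] at hjoint
  have hset : MeasurableSet {p : ℝ × ℝ | |p.1 + p.2| ≤ c} :=
    measurableSet_le (by fun_prop) (by fun_prop)
  have hslice : ∀ x : ℝ, gaussianReal 0 (t - s).toNNReal {z | |x + z| ≤ c} ≤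
      ENNReal.ofReal ((√(2 * Real.pi * (t - s)))⁻¹ * (2 * c)) := by
    intro x
    have hIcc : {z : ℝ | |x + z| ≤ c} = Icc (-x - c) (-x + c) := by
      ext z
      simp only [mem_ofPred_eq, abs_le, mem_Icc]
      constructor <;> rintro ⟨h₁, h₂⟩ <;> constructor <;> linarith
    have hbound := gaussianReal_Icc_le 0 (Real.toNNReal_pos.mpr (sub_pos.mpr hst)).ne'
      (-x - c) (-x + c)
    rw [Real.coe_toNNReal _ (sub_pos.mpr hst).le] at hbound
    rw [hIcc]
    exact hbound.trans_eq (by ring_nf)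
  have : IsProbabilityMeasure (μ.map Z) := Measure.isProbabilityMeasure_map hZm.aemeasurable
  calc μ {ω | |Z ω + (W t ω - W s ω)| ≤ c}
      = μ.map (fun ω => (Z ω, W t ω - W s ω)) {p | |p.1 + p.2| ≤ c} :=
        (Measure.map_apply (hZm.prodMk hWm) hset).symm
    _ = ∫⁻ x, gaussianReal 0 (t - s).toNNReal {z | |x + z| ≤ c} ∂(μ.map Z) := by
        rw [hjoint, Measure.prod_apply hset]; rfl
    _ ≤ ∫⁻ _, ENNReal.ofReal ((√(2 * Real.pi * (t - s)))⁻¹ * (2 * c)) ∂(μ.map Z) :=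
        lintegral_mono hslice
    _ = ENNReal.ofReal ((√(2 * Real.pi * (t - s)))⁻¹ * (2 * c)) := by simp

/-- `Y` is a weak solution of `dY = -κ sgn(Y) dt + dW`, `Y(0) = y`, adapted to the filtration `F`,
for a Brownian motion `W`; the equation holds pathwise in the sense of `IsBangBangPath`. -/
structure IsBangBang (μ : Measure Ω) (F : ℝ → MeasurableSpace Ω) (κ y : ℝ)
    (W Y : ℝ → Ω → ℝ) : Prop where
  bm : IsBM μ F W
  drift_nonneg : 0 ≤ κ
  adapted : ∀ t : ℝ, 0 ≤ t → Measurable[F t] (Y t)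
  path : ∀ᵐ ω ∂μ, IsBangBangPath κ y (fun t => W t ω) (fun t => Y t ω)

namespace IsBangBang

variable {κ y : ℝ} {Y : ℝ → Ω → ℝ}

lemma measurable (hY : IsBangBang μ F κ y W Y) (hs : 0 ≤ s) : Measurable (Y s) :=
  (hY.adapted s hs).mono (hY.bm.le s) le_rfl

-- On `{Y(t) = 0}`, `Y(s)` and the increment of `W` over `[s, t]` cancel up to the drift.
lemma measure_eq_zero_le [IsProbabilityMeasure μ] (hY : IsBangBang μ F κ y W Y) (hs : 0 ≤ s)
    (hst : s < t) : μ {ω | Y t ω = 0} ≤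
      ENNReal.ofReal ((√(2 * Real.pi * (t - s)))⁻¹ * (2 * (κ * (t - s)))) := by
  refine le_trans (measure_mono_ae ?_)
    (hY.bm.measure_abs_add_sub_le hs hst (hY.adapted s hs) (κ * (t - s)))
  filter_upwards [hY.path] with ω hω hzero
  have hdrift := hω.abs_sub_sub_le hY.drift_nonneg hs hst.le
  rw [show Y t ω = 0 from hzero, ← abs_neg] at hdrift
  refine le_of_eq_of_le (congrArg abs ?_) hdrift
  ring

lemma ae_ne_zero [IsProbabilityMeasure μ] (hY : IsBangBang μ F κ y W Y) (ht : 0 < t) :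
    ∀ᵐ ω ∂μ, Y t ω ≠ 0 := by
  have hlim : Tendsto (fun v : ℝ => ENNReal.ofReal (2 * κ / √(2 * Real.pi) * √v))
      (nhdsWithin 0 (Ioi 0)) (nhds 0) := by
    have hcont : Continuous fun v : ℝ => ENNReal.ofReal (2 * κ / √(2 * Real.pi) * √v) :=
      ENNReal.continuous_ofReal.comp (by fun_prop)
    simpa using (hcont.tendsto 0).mono_left nhdsWithin_le_nhds
  have hzero : μ {ω | Y t ω = 0} = 0 := by
    refine le_antisymm (ge_of_tendsto hlim ?_) bot_le
    filter_upwards [Ioc_mem_nhdsGT ht] with v hv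
    refine (hY.measure_eq_zero_le (sub_nonneg.mpr hv.2) (sub_lt_self t hv.1)).trans_eq ?_
    rw [sub_sub_cancel, Real.sqrt_mul (by positivity)]
    congr 1
    have := Real.sqrt_pos.mpr hv.1
    field_simp
    rw [Real.sq_sqrt hv.1.le, mul_comm]
  simpa [ae_iff] using hzero

end IsBangBang

end BrownianMotion

section IncrementMoments

variable {Ω : Type*} {mΩ : MeasurableSpace Ω} {μ : Measure Ω} {F : ℝ → MeasurableSpace Ω}
  {W : ℝ → Ω → ℝ} {s t : ℝ} {Z : Ω → ℝ}

namespace IsBM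

lemma memLp_sub (hW : IsBM μ F W) (hs : 0 ≤ s) (hst : s ≤ t) :
    MemLp (fun ω => W t ω - W s ω) 2 μ := by
  have hid : MemLp id 2 (μ.map fun ω => W t ω - W s ω) := by
    rw [hW.law s t hs hst]
    exact_mod_cast memLp_id_gaussianReal 2
  exact (memLp_map_measure_iff hid.1 (hW.measurable_sub hs hst).aemeasurable).mp hid

lemma integral_sub (hW : IsBM μ F W) (hs : 0 ≤ s) (hst : s ≤ t) :
    ∫ ω, (W t ω - W s ω) ∂μ = 0 := by
  rw [← integral_map (hW.measurable_sub hs hst).aemeasurable (f := fun x : ℝ => x)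
    aestronglyMeasurable_id, hW.law s t hs hst, integral_id_gaussianReal]

lemma integral_sub_sq (hW : IsBM μ F W) (hs : 0 ≤ s) (hst : s ≤ t) :
    ∫ ω, (W t ω - W s ω) ^ 2 ∂μ = t - s := by
  have hvar := variance_of_integral_eq_zero (X := id) (μ := gaussianReal 0 (t - s).toNNReal)
    aemeasurable_id (by simp)
  rw [variance_id_gaussianReal, Real.coe_toNNReal _ (sub_nonneg.mpr hst)] at hvar
  rw [← integral_map (hW.measurable_sub hs hst).aemeasurable (f := fun x : ℝ => x ^ 2)
    (by fun_prop), hW.law s t hs hst]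
  exact hvar.symm

lemma integral_mul_sub (hW : IsBM μ F W) (hs : 0 ≤ s) (hst : s ≤ t) (hZ : Measurable[F s] Z) :
    ∫ ω, Z ω * (W t ω - W s ω) ∂μ = 0 := by
  have hZm : Measurable Z := hZ.mono (hW.le s) le_rfl
  rw [(hW.indepFun_sub hs hst hZ).integral_fun_mul_eq_mul_integral hZm.aestronglyMeasurable
    (hW.measurable_sub hs hst).aestronglyMeasurable, hW.integral_sub hs hst, mul_zero]

lemma integral_mul_sub_sq (hW : IsBM μ F W) (hs : 0 ≤ s) (hst : s ≤ t) (hZ : Measurable[F s] Z) :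
    ∫ ω, Z ω * (W t ω - W s ω) ^ 2 ∂μ = (t - s) * ∫ ω, Z ω ∂μ := by
  have hZm : Measurable Z := hZ.mono (hW.le s) le_rfl
  have hindep : IndepFun Z (fun ω => (W t ω - W s ω) ^ 2) μ :=
    (hW.indepFun_sub hs hst hZ).comp (φ := id) (ψ := fun x : ℝ => x ^ 2) measurable_id
      (by fun_prop)
  rw [hindep.integral_fun_mul_eq_mul_integral hZm.aestronglyMeasurable
    ((hW.measurable_sub hs hst).pow_const 2).aestronglyMeasurable, hW.integral_sub_sq hs hst,
    mul_comm]

end IsBM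

lemma integrable_mul_mul_of_abs_le {C : ℝ} {f g : Ω → ℝ} (hZ : Measurable Z)
    (hC : ∀ ω, |Z ω| ≤ C) (hf : MemLp f 2 μ) (hg : MemLp g 2 μ) :
    Integrable (fun ω => Z ω * f ω * g ω) μ := by
  refine ((hf.integrable_mul hg).bdd_mul (c := C) hZ.aestronglyMeasurable
    (Eventually.of_forall hC)).congr (Eventually.of_forall fun ω => ?_)
  simp [mul_assoc]

namespace IsBM

variable {a b a' b' C : ℝ}

lemma integral_mul_sub_mul_sub_of_le (hW : IsBM μ F W) (ha : 0 ≤ a) (hab : a ≤ b) (hbb' : b ≤ b')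
    (hZ : Measurable[F a] Z) (hC : ∀ ω, |Z ω| ≤ C) :
    ∫ ω, Z ω * (W b ω - W a ω) * (W b' ω - W a ω) ∂μ = (b - a) * ∫ ω, Z ω ∂μ := by
  have hb := ha.trans hab
  have hZm : Measurable Z := hZ.mono (hW.le a) le_rfl
  have hZb : Measurable[F b] fun ω => Z ω * (W b ω - W a ω) :=
    (hZ.mono (hW.mono hab) le_rfl).mul
      ((hW.measurable_of_le hb le_rfl).sub (hW.measurable_of_le ha hab))
  calc ∫ ω, Z ω * (W b ω - W a ω) * (W b' ω - W a ω) ∂μ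
      = ∫ ω, (Z ω * (W b ω - W a ω) * (W b ω - W a ω) +
          Z ω * (W b ω - W a ω) * (W b' ω - W b ω)) ∂μ := by
        congr 1 with ω; ring
    _ = ∫ ω, Z ω * (W b ω - W a ω) * (W b ω - W a ω) ∂μ +
          ∫ ω, Z ω * (W b ω - W a ω) * (W b' ω - W b ω) ∂μ :=
        integral_add
          (integrable_mul_mul_of_abs_le hZm hC (hW.memLp_sub ha hab) (hW.memLp_sub ha hab))
          (integrable_mul_mul_of_abs_le hZm hC (hW.memLp_sub ha hab) (hW.memLp_sub hb hbb'))
    _ = (b - a) * ∫ ω, Z ω ∂μ := by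
        rw [hW.integral_mul_sub hb hbb' hZb, add_zero, ← hW.integral_mul_sub_sq ha hab hZ]
        congr 1 with ω; ring

lemma integral_mul_sub_mul_sub (hW : IsBM μ F W) (ha : 0 ≤ a) (hab : a ≤ b) (hab' : a' ≤ b')
    (haa' : a ≤ a') (hZ : Measurable[F a'] Z) (hC : ∀ ω, |Z ω| ≤ C) :
    ∫ ω, Z ω * (W b ω - W a ω) * (W b' ω - W a' ω) ∂μ =
      max (min b b' - a') 0 * ∫ ω, Z ω ∂μ := by
  have ha' := ha.trans haa'
  have hZm : Measurable Z := hZ.mono (hW.le a') le_rfl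
  have hpast : ∀ s, a ≤ s → s ≤ a' → Measurable[F a'] fun ω => Z ω * (W s ω - W a ω) :=
    fun s has hsa' => hZ.mul
      ((hW.measurable_of_le (ha.trans has) hsa').sub (hW.measurable_of_le ha haa'))
  rcases le_total b a' with hba' | ha'b
  · rw [hW.integral_mul_sub ha' hab' (hpast b hab hba'), max_eq_right, zero_mul]
    exact sub_nonpos.mpr ((min_le_left b b').trans hba')
  have hoverlap : ∫ ω, Z ω * (W b ω - W a' ω) * (W b' ω - W a' ω) ∂μ =
      (min b b' - a') * ∫ ω, Z ω ∂μ := by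
    rcases le_total b b' with hbb' | hb'b
    · rw [hW.integral_mul_sub_mul_sub_of_le ha' ha'b hbb' hZ hC, min_eq_left hbb']
    · rw [min_eq_right hb'b, ← hW.integral_mul_sub_mul_sub_of_le ha' hab' hb'b hZ hC]
      congr 1 with ω; ring
  calc ∫ ω, Z ω * (W b ω - W a ω) * (W b' ω - W a' ω) ∂μ
      = ∫ ω, (Z ω * (W a' ω - W a ω) * (W b' ω - W a' ω) +
          Z ω * (W b ω - W a' ω) * (W b' ω - W a' ω)) ∂μ := by
        congr 1 with ω; ring
    _ = ∫ ω, Z ω * (W a' ω - W a ω) * (W b' ω - W a' ω) ∂μ +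
          ∫ ω, Z ω * (W b ω - W a' ω) * (W b' ω - W a' ω) ∂μ :=
        integral_add
          (integrable_mul_mul_of_abs_le hZm hC (hW.memLp_sub ha haa') (hW.memLp_sub ha' hab'))
          (integrable_mul_mul_of_abs_le hZm hC (hW.memLp_sub ha' ha'b) (hW.memLp_sub ha' hab'))
    _ = max (min b b' - a') 0 * ∫ ω, Z ω ∂μ := by
        rw [hW.integral_mul_sub ha' hab' (hpast a' haa' le_rfl), zero_add, hoverlap,
          max_eq_left (sub_nonneg.mpr (le_min ha'b hab'))]

end IsBM

end IncrementMoments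

section ItoIntegral

variable {Ω : Type*} {mΩ : MeasurableSpace Ω} {μ : Measure Ω} {F : ℝ → MeasurableSpace Ω}
  {W : ℝ → Ω → ℝ} {a b a' b' C : ℝ} {c c' : Ω → ℝ}

/-- The process `H` restricted to the time interval `(a, b]`, as a function on `ℝ × Ω`. -/
def cutoff (a b : ℝ) (H : ℝ → Ω → ℝ) (q : ℝ × Ω) : ℝ :=
  (Ioc a b).indicator (fun u => H u q.2) q.1

lemma cutoff_of_mem {H : ℝ → Ω → ℝ} {q : ℝ × Ω} (hq : q.1 ∈ Ioc a b) :
    cutoff a b H q = H q.1 q.2 :=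
  indicator_of_mem hq _

lemma cutoff_of_notMem {H : ℝ → Ω → ℝ} {q : ℝ × Ω} (hq : q.1 ∉ Ioc a b) : cutoff a b H q = 0 :=
  indicator_of_notMem hq _

lemma integral_cutoff_mul_cutoff [SFinite μ] (haa' : a ≤ a') (c c' : Ω → ℝ) :
    ∫ q, cutoff a b (fun _ => c) q * cutoff a' b' (fun _ => c') q ∂volume.prod μ =
      max (min b b' - a') 0 * ∫ ω, c ω * c' ω ∂μ := by
  have hprod : ∀ q : ℝ × Ω, cutoff a b (fun _ => c) q * cutoff a' b' (fun _ => c') q =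
      (Ioc a' (min b b')).indicator 1 q.1 * (c q.2 * c' q.2) := by
    intro q
    simp only [cutoff, indicator, mem_Ioc, le_min_iff, Pi.one_apply]
    grind
  simp_rw [hprod]
  rw [integral_prod_mul (μ := volume) (ν := μ) ((Ioc a' (min b b')).indicator 1)
    (fun ω => c ω * c' ω), integral_indicator_one measurableSet_Ioc, Real.volume_real_Ioc]

lemma memLp_cutoff_const [IsFiniteMeasure μ] (hc : Measurable c) (hC : ∀ ω, |c ω| ≤ C) :
    MemLp (cutoff a b fun _ => c) 2 (volume.prod μ) := by
  have hset : MeasurableSet (Ioc a b ×ˢ (univ : Set Ω)) := measurableSet_Ioc.prod .univ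
  have hcut : (cutoff a b fun _ => c) =
      (Ioc a b ×ˢ (univ : Set Ω)).indicator fun q : ℝ × Ω => c q.2 := by
    ext q
    simp [cutoff, indicator]
  have hfin : IsFiniteMeasure ((volume.prod μ).restrict (Ioc a b ×ˢ (univ : Set Ω))) := by
    rw [isFiniteMeasure_restrict, Measure.prod_prod, Real.volume_Ioc]
    exact ENNReal.mul_ne_top ENNReal.ofReal_ne_top (measure_ne_top μ univ)
  rw [hcut, memLp_indicator_iff_restrict hset]
  exact MemLp.of_bound (hc.comp measurable_snd).aestronglyMeasurable C
    (Eventually.of_forall fun q => hC q.2)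

/-- Pairs (integrand, Itô integral) for the elementary integrands `c 1_{(a, b]}` with `c` bounded
and `F a`-measurable. -/
def elementaryItoGraph (μ : Measure Ω) (F : ℝ → MeasurableSpace Ω) (W : ℝ → Ω → ℝ) :
    Set (Lp ℝ 2 ((volume : Measure ℝ).prod μ) × Lp ℝ 2 μ) :=
  {p | ∃ (a b : ℝ) (c : Ω → ℝ) (C : ℝ), 0 ≤ a ∧ a ≤ b ∧ Measurable[F a] c ∧
    (∀ ω, |c ω| ≤ C) ∧ p.1 =ᵐ[volume.prod μ] cutoff a b (fun _ => c) ∧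
    p.2 =ᵐ[μ] fun ω => c ω * (W b ω - W a ω)}

/-- The graph of the Itô integral with respect to `W` on deterministic time intervals: the `L²`
closure of the linear span of the elementary pairs. -/
def itoGraph (μ : Measure Ω) (F : ℝ → MeasurableSpace Ω) (W : ℝ → Ω → ℝ) :
    Submodule ℝ (Lp ℝ 2 ((volume : Measure ℝ).prod μ) × Lp ℝ 2 μ) :=
  (Submodule.span ℝ (elementaryItoGraph μ F W)).topologicalClosure

lemma integral_cutoff_mul_cutoff_eq [SFinite μ] (hW : IsBM μ F W) (ha : 0 ≤ a) (hab : a ≤ b)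
    (hab' : a' ≤ b') (haa' : a ≤ a') (hc : Measurable[F a'] fun ω => c ω * c' ω)
    (hC : ∀ ω, |c ω * c' ω| ≤ C) :
    ∫ q, cutoff a b (fun _ => c) q * cutoff a' b' (fun _ => c') q ∂volume.prod μ =
      ∫ ω, (c ω * (W b ω - W a ω)) * (c' ω * (W b' ω - W a' ω)) ∂μ := by
  rw [integral_cutoff_mul_cutoff haa', ← hW.integral_mul_sub_mul_sub ha hab hab' haa' hc hC]
  congr 1 with ω
  ring

lemma inner_fst_eq_inner_snd_of_mem_elementaryItoGraph [SFinite μ] (hW : IsBM μ F W)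
    {p p' : Lp ℝ 2 ((volume : Measure ℝ).prod μ) × Lp ℝ 2 μ} (hp : p ∈ elementaryItoGraph μ F W)
    (hp' : p' ∈ elementaryItoGraph μ F W) : inner ℝ p.1 p'.1 = inner ℝ p.2 p'.2 := by
  obtain ⟨a, b, c, C, ha, hab, hc, hC, hp₁, hp₂⟩ := hp
  obtain ⟨a', b', c', C', ha', hab', hc', hC', hp₁', hp₂'⟩ := hp'
  have hCC' : ∀ ω, |c ω * c' ω| ≤ C * C' := fun ω => by
    rw [abs_mul]
    exact mul_le_mul (hC ω) (hC' ω) (abs_nonneg _) ((abs_nonneg _).trans (hC ω))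
  have hintegrand : inner ℝ p.1 p'.1 =
      ∫ q, cutoff a b (fun _ => c) q * cutoff a' b' (fun _ => c') q ∂volume.prod μ := by
    rw [L2.inner_def]
    refine integral_congr_ae ?_
    filter_upwards [hp₁, hp₁'] with q hq hq'
    rw [hq, hq', Real.inner_apply]
  have hvalue : inner ℝ p.2 p'.2 =
      ∫ ω, (c ω * (W b ω - W a ω)) * (c' ω * (W b' ω - W a' ω)) ∂μ := by
    rw [L2.inner_def]
    refine integral_congr_ae ?_
    filter_upwards [hp₂, hp₂'] with ω hω hω'
    rw [hω, hω', Real.inner_apply]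
  rw [hintegrand, hvalue]
  rcases le_total a a' with haa' | ha'a
  · exact integral_cutoff_mul_cutoff_eq hW ha hab hab' haa'
      ((hc.mono (hW.mono haa') le_rfl).mul hc') hCC'
  · simp_rw [mul_comm (cutoff a b _ _), mul_comm (c _ * _)]
    exact integral_cutoff_mul_cutoff_eq hW ha' hab' hab ha'a
      ((hc'.mono (hW.mono ha'a) le_rfl).mul hc) fun ω => mul_comm (c ω) (c' ω) ▸ hCC' ω

lemma inner_fst_eq_inner_snd_of_mem_span [SFinite μ] (hW : IsBM μ F W)
    {p p' : Lp ℝ 2 ((volume : Measure ℝ).prod μ) × Lp ℝ 2 μ}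
    (hp : p ∈ Submodule.span ℝ (elementaryItoGraph μ F W))
    (hp' : p' ∈ Submodule.span ℝ (elementaryItoGraph μ F W)) :
    inner ℝ p.1 p'.1 = inner ℝ p.2 p'.2 := by
  induction hp, hp' using Submodule.span_induction₂ with
  | mem_mem x y hx hy => exact inner_fst_eq_inner_snd_of_mem_elementaryItoGraph hW hx hy
  | zero_left y _ => simp
  | zero_right x _ => simp
  | add_left x y z _ _ _ hxz hyz => simp [inner_add_left, hxz, hyz]
  | add_right x y z _ _ _ hxy hxz => simp [inner_add_right, hxy, hxz]
  | smul_left r x y _ _ hxy => simp [inner_smul_left, hxy]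
  | smul_right r x y _ _ hxy => simp [inner_smul_right, hxy]

lemma norm_fst_eq_norm_snd_of_mem_itoGraph [SFinite μ] (hW : IsBM μ F W)
    {p : Lp ℝ 2 ((volume : Measure ℝ).prod μ) × Lp ℝ 2 μ} (hp : p ∈ itoGraph μ F W) :
    ‖p.1‖ = ‖p.2‖ := by
  refine closure_minimal (t := {p | ‖p.1‖ = ‖p.2‖}) (fun p hp => ?_)
    (isClosed_eq continuous_fst.norm continuous_snd.norm) hp
  have hinner := inner_fst_eq_inner_snd_of_mem_span hW hp hp
  rw [real_inner_self_eq_norm_sq, real_inner_self_eq_norm_sq] at hinner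
  exact (sq_eq_sq₀ (norm_nonneg _) (norm_nonneg _)).mp hinner

/-- `ξ` is a version of the Itô integral `∫ K dW`. -/
def HasItoIntegral (μ : Measure Ω) (F : ℝ → MeasurableSpace Ω) (W : ℝ → Ω → ℝ)
    (K : ℝ × Ω → ℝ) (ξ : Ω → ℝ) : Prop :=
  ∃ (hK : MemLp K 2 (volume.prod μ)) (hξ : MemLp ξ 2 μ), (hK.toLp K, hξ.toLp ξ) ∈ itoGraph μ F W

namespace HasItoIntegral

variable {K K' : ℝ × Ω → ℝ} {ξ ξ' : Ω → ℝ}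

lemma elementary [IsFiniteMeasure μ] (hW : IsBM μ F W) (ha : 0 ≤ a) (hab : a ≤ b)
    (hc : Measurable[F a] c) (hC : ∀ ω, |c ω| ≤ C) :
    HasItoIntegral μ F W (cutoff a b fun _ => c) (fun ω => c ω * (W b ω - W a ω)) := by
  have hcm : Measurable c := hc.mono (hW.le a) le_rfl
  have hK : MemLp (cutoff a b fun _ => c) 2 (volume.prod μ) := memLp_cutoff_const hcm hC
  have hξ : MemLp (fun ω => c ω * (W b ω - W a ω)) 2 μ :=
    MemLp.mul' (hW.memLp_sub ha hab)
      (memLp_top_of_bound hcm.aestronglyMeasurable C (Eventually.of_forall hC))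
  exact ⟨hK, hξ, Submodule.le_topologicalClosure _ (Submodule.subset_span
    ⟨a, b, c, C, ha, hab, hc, hC, hK.coeFn_toLp, hξ.coeFn_toLp⟩)⟩

lemma add (h : HasItoIntegral μ F W K ξ) (h' : HasItoIntegral μ F W K' ξ') :
    HasItoIntegral μ F W (K + K') (ξ + ξ') :=
  let ⟨hK, hξ, hmem⟩ := h
  let ⟨hK', hξ', hmem'⟩ := h'
  ⟨hK.add hK', hξ.add hξ', add_mem hmem hmem'⟩

lemma sub (h : HasItoIntegral μ F W K ξ) (h' : HasItoIntegral μ F W K' ξ') :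
    HasItoIntegral μ F W (K - K') (ξ - ξ') :=
  let ⟨hK, hξ, hmem⟩ := h
  let ⟨hK', hξ', hmem'⟩ := h'
  ⟨hK.sub hK', hξ.sub hξ', sub_mem hmem hmem'⟩

lemma zero : HasItoIntegral μ F W 0 0 := ⟨MemLp.zero, MemLp.zero, zero_mem _⟩

lemma sum {ι : Type*} (s : Finset ι) {K : ι → ℝ × Ω → ℝ} {ξ : ι → Ω → ℝ}
    (h : ∀ i ∈ s, HasItoIntegral μ F W (K i) (ξ i)) :
    HasItoIntegral μ F W (∑ i ∈ s, K i) (∑ i ∈ s, ξ i) := by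
  classical
  induction s using Finset.induction_on with
  | empty => simpa using zero
  | insert i s hi ih =>
    rw [Finset.sum_insert hi, Finset.sum_insert hi]
    exact (h i (Finset.mem_insert_self _ _)).add (ih fun j hj => h j (Finset.mem_insert_of_mem hj))

lemma congr (h : HasItoIntegral μ F W K ξ) (hK : K =ᵐ[volume.prod μ] K') (hξ : ξ =ᵐ[μ] ξ') :
    HasItoIntegral μ F W K' ξ' := by
  obtain ⟨hK₂, hξ₂, hmem⟩ := h
  refine ⟨hK₂.ae_eq hK, hξ₂.ae_eq hξ, ?_⟩
  rwa [← MemLp.toLp_congr hK₂ _ hK, ← MemLp.toLp_congr hξ₂ _ hξ]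

lemma eLpNorm_eq [SFinite μ] (hW : IsBM μ F W) (h : HasItoIntegral μ F W K ξ) :
    eLpNorm K 2 (volume.prod μ) = eLpNorm ξ 2 μ := by
  obtain ⟨hK, hξ, hmem⟩ := h
  have hnorm := norm_fst_eq_norm_snd_of_mem_itoGraph hW hmem
  simp only [Lp.norm_toLp] at hnorm
  exact (ENNReal.toReal_eq_toReal_iff' hK.2.ne hξ.2.ne).mp hnorm

variable {Kₙ : ℕ → ℝ × Ω → ℝ} {ξₙ : ℕ → Ω → ℝ}

lemma tendstoInMeasure [SFinite μ] (hW : IsBM μ F W)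
    (hₙ : ∀ n, HasItoIntegral μ F W (Kₙ n) (ξₙ n)) (h : HasItoIntegral μ F W K ξ)
    (hlim : Tendsto (fun n => eLpNorm (Kₙ n - K) 2 (volume.prod μ)) atTop (nhds 0)) :
    TendstoInMeasure μ ξₙ atTop ξ :=
  let ⟨_, hξ, _⟩ := h
  tendstoInMeasure_of_tendsto_eLpNorm two_ne_zero
    (fun n => let ⟨_, hξₙ, _⟩ := hₙ n; hξₙ.1) hξ.1
    (hlim.congr fun n => ((hₙ n).sub h).eLpNorm_eq hW)

lemma of_tendsto [SFinite μ] (hW : IsBM μ F W) (hₙ : ∀ n, HasItoIntegral μ F W (Kₙ n) (ξₙ n))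
    (hK : MemLp K 2 (volume.prod μ))
    (hlim : Tendsto (fun n => eLpNorm (Kₙ n - K) 2 (volume.prod μ)) atTop (nhds 0))
    (hξ : TendstoInMeasure μ ξₙ atTop ξ) : HasItoIntegral μ F W K ξ := by
  choose hK₂ hξ₂ hmem using hₙ
  have hKlim := (Lp.tendsto_Lp_iff_tendsto_eLpNorm'' Kₙ hK₂ K hK).mpr hlim
  have hcauchy : CauchySeq fun n => (hξ₂ n).toLp (ξₙ n) := by
    have hKcauchy := hKlim.cauchySeq
    rw [Metric.cauchySeq_iff] at hKcauchy ⊢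
    refine fun ε hε => (hKcauchy ε hε).imp fun N hN i hi j hj => ?_
    have hdist := hN i hi j hj
    rw [dist_eq_norm] at hdist ⊢
    exact (norm_fst_eq_norm_snd_of_mem_itoGraph hW (sub_mem (hmem i) (hmem j))).symm.trans_lt hdist
  obtain ⟨η, hη⟩ := cauchySeq_tendsto_of_complete hcauchy
  have hηξ : η =ᵐ[μ] ξ := tendstoInMeasure_ae_unique
    ((tendstoInMeasure_of_tendsto_Lp hη).congr_left fun n => (hξ₂ n).coeFn_toLp) hξ
  have hKη : HasItoIntegral μ F W K η := by
    refine ⟨hK, Lp.memLp η, ?_⟩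
    rw [Lp.toLp_coeFn]
    exact (Submodule.isClosed_topologicalClosure _).mem_of_tendsto (hKlim.prodMk_nhds hη)
      (Eventually.of_forall hmem)
  exact hKη.congr ae_eq_rfl hηξ

end HasItoIntegral

end ItoIntegral

section Convergence

variable {α E E' G : Type*} {mα : MeasurableSpace α} {ν : Measure α}

lemma tendsto_eLpNorm_zero_of_dominated [NormedAddCommGroup E] {p : ENNReal} (hp : p ≠ 0)
    (hp' : p ≠ ⊤) {f : ℕ → α → E} {bound : α → ℝ} (hf : ∀ n, AEStronglyMeasurable (f n) ν)
    (hbound : MemLp bound p ν) (hle : ∀ n, ∀ᵐ x ∂ν, ‖f n x‖ ≤ bound x)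
    (hlim : ∀ᵐ x ∂ν, Tendsto (fun n => f n x) atTop (nhds 0)) :
    Tendsto (fun n => eLpNorm (f n) p ν) atTop (nhds 0) := by
  have hp₀ : 0 < p.toReal := ENNReal.toReal_pos hp hp'
  simp_rw [eLpNorm_eq_lintegral_rpow_enorm_toReal hp hp']
  have hintegral : Tendsto (fun n => ∫⁻ x, ‖f n x‖ₑ ^ p.toReal ∂ν) atTop (nhds (∫⁻ _, 0 ∂ν)) := by
    refine tendsto_lintegral_of_dominated_convergence' (fun x => ‖bound x‖ₑ ^ p.toReal)
      (fun n => (hf n).enorm.pow_const _) (fun n => ?_)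
      (lintegral_rpow_enorm_lt_top_of_eLpNorm_lt_top hp hp' hbound.2).ne ?_
    · filter_upwards [hle n] with x hx
      gcongr
      exact enorm_le_iff_norm_le.mpr (hx.trans (le_abs_self _))
    · filter_upwards [hlim] with x hx
      simpa [hp₀] using hx.enorm.ennrpow_const p.toReal
  simpa [hp₀] using hintegral.ennrpow_const (1 / p.toReal)

lemma tendstoInMeasure_map₂ [IsFiniteMeasure ν] [PseudoEMetricSpace E] [PseudoEMetricSpace E']
    [PseudoEMetricSpace G] {φ : E → E' → G} (hφ : Continuous (Function.uncurry φ))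
    {f : ℕ → α → E} {f' : ℕ → α → E'} {g : α → E} {g' : α → E'}
    (hf : ∀ n, AEStronglyMeasurable (f n) ν) (hf' : ∀ n, AEStronglyMeasurable (f' n) ν)
    (hfg : TendstoInMeasure ν f atTop g) (hfg' : TendstoInMeasure ν f' atTop g') :
    TendstoInMeasure ν (fun n x => φ (f n x) (f' n x)) atTop (fun x => φ (g x) (g' x)) := by
  refine (exists_seq_tendstoInMeasure_atTop_iff fun n =>
    hφ.comp_aestronglyMeasurable ((hf n).prodMk (hf' n))).mpr fun k hk => ?_
  obtain ⟨i, hi, hfi⟩ := (hfg.comp hk.tendsto_atTop).exists_seq_tendsto_ae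
  obtain ⟨j, hj, hfj⟩ := (hfg'.comp (hk.comp hi).tendsto_atTop).exists_seq_tendsto_ae
  refine ⟨i ∘ j, hi.comp hj, ?_⟩
  filter_upwards [hfi, hfj] with x hx hx'
  exact (hφ.tendsto (g x, g' x)).comp ((hx.comp hj.tendsto_atTop).prodMk_nhds hx')

lemma tendstoInMeasure_const_mul [IsFiniteMeasure ν] {c : α → ℝ} {f : ℕ → α → ℝ} {g : α → ℝ}
    (hc : AEStronglyMeasurable c ν) (hf : ∀ n, AEStronglyMeasurable (f n) ν)
    (hfg : TendstoInMeasure ν f atTop g) :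
    TendstoInMeasure ν (fun n x => c x * f n x) atTop (fun x => c x * g x) :=
  tendstoInMeasure_map₂ (φ := (· * ·)) (by fun_prop) (fun _ => hc) hf
    (tendstoInMeasure_of_tendsto_ae (fun _ => hc) (ae_of_all _ fun _ => tendsto_const_nhds)) hfg

end Convergence

section DyadicPartition

variable {Ω : Type*} {a b u : ℝ} {n i j : ℕ}

/-- The point with index `i` of the partition of `[a, b]` into `2 ^ n` intervals of equal
length. -/
def dyadicPoint (a b : ℝ) (n i : ℕ) : ℝ := a + (b - a) * i / 2 ^ n

lemma dyadicPoint_zero (a b : ℝ) (n : ℕ) : dyadicPoint a b n 0 = a := by simp [dyadicPoint]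

lemma dyadicPoint_two_pow (a b : ℝ) (n : ℕ) : dyadicPoint a b n (2 ^ n) = b := by
  simp [dyadicPoint]

lemma dyadicPoint_succ (a b : ℝ) (n i : ℕ) :
    dyadicPoint a b n (i + 1) = dyadicPoint a b n i + (b - a) / 2 ^ n := by
  simp only [dyadicPoint]
  push_cast
  ring

lemma monotone_dyadicPoint (hab : a ≤ b) (n : ℕ) : Monotone (dyadicPoint a b n) :=
  monotone_nat_of_le_succ fun i => by
    rw [dyadicPoint_succ]
    exact le_add_of_nonneg_right (div_nonneg (sub_nonneg.mpr hab) (by positivity))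

lemma le_dyadicPoint (hab : a ≤ b) (n i : ℕ) : a ≤ dyadicPoint a b n i :=
  (dyadicPoint_zero a b n).ge.trans (monotone_dyadicPoint hab n (Nat.zero_le i))

lemma dyadicPoint_le (hab : a ≤ b) (hi : i ≤ 2 ^ n) : dyadicPoint a b n i ≤ b :=
  (monotone_dyadicPoint hab n hi).trans (dyadicPoint_two_pow a b n).le

/-- The dyadic interval `(dyadicPoint a b n i, dyadicPoint a b n (i + 1)]`. -/
def dyadicCell (a b : ℝ) (n i : ℕ) : Set ℝ :=
  Ioc (dyadicPoint a b n i) (dyadicPoint a b n (i + 1))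

lemma measurableSet_dyadicCell (a b : ℝ) (n i : ℕ) : MeasurableSet (dyadicCell a b n i) :=
  measurableSet_Ioc

lemma exists_mem_dyadicCell (hu : u ∈ Ioc a b) (n : ℕ) :
    ∃ j < 2 ^ n, u ∈ dyadicCell a b n j := by
  classical
  have hlast : u ≤ dyadicPoint a b n (2 ^ n) := (dyadicPoint_two_pow a b n).symm ▸ hu.2
  have hex : ∃ k, u ≤ dyadicPoint a b n k := ⟨2 ^ n, hlast⟩
  have hpos : Nat.find hex ≠ 0 := fun h => by
    have hspec := Nat.find_spec hex
    rw [h, dyadicPoint_zero] at hspec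
    exact hspec.not_gt hu.1
  obtain ⟨j, hj⟩ := Nat.exists_eq_succ_of_ne_zero hpos
  refine ⟨j, ?_, not_le.mp (Nat.find_min hex (by lia)), (Nat.find_spec hex).trans_eq (by rw [hj])⟩
  have := Nat.find_min' hex hlast
  lia

lemma dyadicCell_subset (hab : a ≤ b) (hi : i < 2 ^ n) : dyadicCell a b n i ⊆ Ioc a b :=
  Ioc_subset_Ioc (le_dyadicPoint hab n i) (dyadicPoint_le hab hi)

lemma dyadicCell_inj (hab : a ≤ b) (hi : u ∈ dyadicCell a b n i) (hj : u ∈ dyadicCell a b n j) :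
    i = j := by
  by_contra hij
  rcases lt_or_gt_of_ne hij with hlt | hlt
  · exact ((monotone_dyadicPoint hab n hlt).trans_lt hj.1).not_ge hi.2
  · exact ((monotone_dyadicPoint hab n hlt).trans_lt hi.1).not_ge hj.2

lemma tendsto_dyadicPoint_of_mem_dyadicCell {j : ℕ → ℕ} (hj : ∀ n, u ∈ dyadicCell a b n (j n)) :
    Tendsto (fun n => dyadicPoint a b n (j n)) atTop (nhds u) := by
  have hlower : Tendsto (fun n : ℕ => u - (b - a) / 2 ^ n) atTop (nhds u) := by
    simpa using tendsto_const_nhds.sub (tendsto_div_two_pow (b - a))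
  refine tendsto_of_tendsto_of_tendsto_of_le_of_le hlower tendsto_const_nhds (fun n => ?_)
    fun n => (hj n).1.le
  have hright := (hj n).2
  rw [dyadicPoint_succ] at hright
  exact sub_le_iff_le_add.mpr hright

lemma sum_indicator_dyadicCell (hab : a ≤ b) (hj : j < 2 ^ n) (hu : u ∈ dyadicCell a b n j)
    (f : ℕ → ℝ → ℝ) :
    ∑ i ∈ Finset.range (2 ^ n), (dyadicCell a b n i).indicator (f i) u = f j u := by
  rw [Finset.sum_eq_single_of_mem j (Finset.mem_range.mpr hj), indicator_of_mem hu]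
  exact fun i _ hij => indicator_of_notMem (fun hi => hij (dyadicCell_inj hab hi hu)) _

lemma sum_indicator_dyadicCell_of_notMem (hab : a ≤ b) (hu : u ∉ Ioc a b) (f : ℕ → ℝ → ℝ) :
    ∑ i ∈ Finset.range (2 ^ n), (dyadicCell a b n i).indicator (f i) u = 0 :=
  Finset.sum_eq_zero fun _ hi => indicator_of_notMem
    (fun hmem => hu (dyadicCell_subset hab (Finset.mem_range.mp hi) hmem)) _

/-- The left-point Riemann sum of `H` against `X` over the partition of `[a, b]` into `2 ^ n`
intervals of equal length. -/
def dyadicSum (H X : ℝ → Ω → ℝ) (a b : ℝ) (n : ℕ) (ω : Ω) : ℝ :=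
  ∑ i ∈ Finset.range (2 ^ n), H (dyadicPoint a b n i) ω *
    (X (dyadicPoint a b n (i + 1)) ω - X (dyadicPoint a b n i) ω)

lemma rsum_eq_dyadicSum (H X : ℝ → Ω → ℝ) (t : ℝ) : rsum H X t = dyadicSum H X 0 t := by
  ext n ω
  simp [rsum, dyadicSum, dyadicPoint]

lemma measurable_dyadicSum {_ : MeasurableSpace Ω} {H X : ℝ → Ω → ℝ} (hab : a ≤ b)
    (hH : ∀ s ∈ Icc a b, Measurable (H s)) (hX : ∀ s ∈ Icc a b, Measurable (X s)) (n : ℕ) :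
    Measurable (dyadicSum H X a b n) := by
  have hmem : ∀ i ≤ 2 ^ n, dyadicPoint a b n i ∈ Icc a b := fun i hi =>
    ⟨le_dyadicPoint hab n i, dyadicPoint_le hab hi⟩
  refine Finset.measurable_fun_sum _ fun i hi => ?_
  have hi := Finset.mem_range.mp hi
  exact (hH _ (hmem i hi.le)).mul ((hX _ (hmem _ hi)).sub (hX _ (hmem i hi.le)))

end DyadicPartition

section DyadicIntegral

variable {a b : ℝ} {h f : ℝ → ℝ} {C : ℝ}

lemma tendsto_sum_indicator_dyadicCell_mul (hab : a ≤ b) {u : ℝ}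
    (hh : u ∈ Ioc a b → ContinuousAt h u) :
    Tendsto (fun n => ∑ i ∈ Finset.range (2 ^ n),
        (dyadicCell a b n i).indicator (fun v => h (dyadicPoint a b n i) * f v) u) atTop
      (nhds ((Ioc a b).indicator (fun v => h v * f v) u)) := by
  by_cases hu : u ∈ Ioc a b
  · choose j hj hmem using exists_mem_dyadicCell hu
    simp_rw [fun n => sum_indicator_dyadicCell hab (hj n) (hmem n)
      fun i v => h (dyadicPoint a b n i) * f v, indicator_of_mem hu]
    exact ((hh hu).tendsto.comp (tendsto_dyadicPoint_of_mem_dyadicCell hmem)).mul_const _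
  · simp_rw [sum_indicator_dyadicCell_of_notMem hab hu, indicator_of_notMem hu]
    exact tendsto_const_nhds

lemma abs_sum_indicator_dyadicCell_mul_le (hab : a ≤ b) (hC : ∀ v, |h v| ≤ C) (n : ℕ) (u : ℝ) :
    |∑ i ∈ Finset.range (2 ^ n),
        (dyadicCell a b n i).indicator (fun v => h (dyadicPoint a b n i) * f v) u| ≤
      C * |(Ioc a b).indicator f u| := by
  by_cases hu : u ∈ Ioc a b
  · obtain ⟨j, hj, hmem⟩ := exists_mem_dyadicCell hu n
    rw [sum_indicator_dyadicCell hab hj hmem fun i v => h (dyadicPoint a b n i) * f v,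
      indicator_of_mem hu, abs_mul]
    exact mul_le_mul_of_nonneg_right (hC _) (abs_nonneg _)
  · simp [sum_indicator_dyadicCell_of_notMem hab hu, indicator_of_notMem hu]

lemma tendsto_sum_mul_integral_dyadicCell (hab : a ≤ b) (hC : ∀ v, |h v| ≤ C)
    (hh : ∀ᵐ u, u ∈ Ioc a b → ContinuousAt h u) (hf : IntervalIntegrable f volume a b) :
    Tendsto (fun n => ∑ i ∈ Finset.range (2 ^ n), h (dyadicPoint a b n i) *
        ∫ u in dyadicPoint a b n i..dyadicPoint a b n (i + 1), f u) atTop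
      (nhds (∫ u in a..b, h u * f u)) := by
  have hfi : IntegrableOn f (Ioc a b) := (intervalIntegrable_iff_integrableOn_Ioc_of_le hab).mp hf
  have hcell : ∀ n, ∀ i ∈ Finset.range (2 ^ n), Integrable
      ((dyadicCell a b n i).indicator fun v => h (dyadicPoint a b n i) * f v) := fun n i hi =>
    (integrable_indicator_iff (measurableSet_dyadicCell a b n i)).mpr
      ((hfi.mono_set (dyadicCell_subset hab (Finset.mem_range.mp hi))).const_mul _)
  have hsum : ∀ n, ∑ i ∈ Finset.range (2 ^ n), h (dyadicPoint a b n i) *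
        ∫ u in dyadicPoint a b n i..dyadicPoint a b n (i + 1), f u =
      ∫ u, ∑ i ∈ Finset.range (2 ^ n),
        (dyadicCell a b n i).indicator (fun v => h (dyadicPoint a b n i) * f v) u := fun n => by
    rw [integral_finsetSum _ (hcell n)]
    refine Finset.sum_congr rfl fun i _ => ?_
    rw [integral_indicator (measurableSet_dyadicCell a b n i), integral_const_mul,
      intervalIntegral.integral_of_le (monotone_dyadicPoint hab n i.le_succ), dyadicCell]
  simp_rw [hsum]
  rw [intervalIntegral.integral_of_le hab, ← integral_indicator measurableSet_Ioc]
  refine tendsto_integral_of_dominated_convergence (fun u => C * |(Ioc a b).indicator f u|)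
    (fun n => (integrable_finsetSum _ (hcell n)).aestronglyMeasurable)
    ((hfi.integrable_indicator measurableSet_Ioc).abs.const_mul C)
    (fun n => ae_of_all _ (abs_sum_indicator_dyadicCell_mul_le hab hC n)) ?_
  filter_upwards [hh] with u hu
  exact tendsto_sum_indicator_dyadicCell_mul hab hu

end DyadicIntegral

section ItoProcess

variable {Ω : Type*} {mΩ : MeasurableSpace Ω} {μ : Measure Ω} {F : ℝ → MeasurableSpace Ω}
  {W H K L X I J : ℝ → Ω → ℝ} {a b c₀ C : ℝ} {c : Ω → ℝ}

/-- The integrand of the Riemann sum `dyadicSum H X a b n` when `X = ∫ K dW`: the process `H K`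
with `H` frozen at the left endpoint of each dyadic interval. -/
def dyadicIntegrand (H K : ℝ → Ω → ℝ) (a b : ℝ) (n : ℕ) : ℝ × Ω → ℝ :=
  ∑ i ∈ Finset.range (2 ^ n), cutoff (dyadicPoint a b n i) (dyadicPoint a b n (i + 1))
    fun u ω => H (dyadicPoint a b n i) ω * K u ω

lemma dyadicIntegrand_apply (H K : ℝ → Ω → ℝ) (a b : ℝ) (n : ℕ) (q : ℝ × Ω) :
    dyadicIntegrand H K a b n q = ∑ i ∈ Finset.range (2 ^ n),
      (dyadicCell a b n i).indicator (fun v => H (dyadicPoint a b n i) q.2 * K v q.2) q.1 :=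
  Finset.sum_apply q _ _

lemma aestronglyMeasurable_dyadicIntegrand (hab : a ≤ b) (hH : ∀ t, a ≤ t → Measurable (H t))
    (hK : AEStronglyMeasurable (cutoff a b K) (volume.prod μ)) (n : ℕ) :
    AEStronglyMeasurable (dyadicIntegrand H K a b n) (volume.prod μ) := by
  refine Finset.aestronglyMeasurable_sum _ fun i hi => ?_
  have hcell : cutoff (dyadicPoint a b n i) (dyadicPoint a b n (i + 1))
        (fun u ω => H (dyadicPoint a b n i) ω * K u ω) =
      (dyadicCell a b n i ×ˢ (univ : Set Ω)).indicator
        fun q => H (dyadicPoint a b n i) q.2 * cutoff a b K q := by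
    ext q
    by_cases hq : q.1 ∈ dyadicCell a b n i
    · rw [cutoff_of_mem hq, indicator_of_mem (mk_mem_prod hq (mem_univ q.2)),
        cutoff_of_mem (dyadicCell_subset hab (Finset.mem_range.mp hi) hq)]
    · rw [cutoff_of_notMem hq, indicator_of_notMem fun h => hq h.1]
  rw [hcell]
  exact (((hH _ (le_dyadicPoint hab n i)).comp measurable_snd).aestronglyMeasurable.mul
    hK).indicator ((measurableSet_dyadicCell a b n i).prod .univ)

lemma cutoff_sub_cutoff (hac : c₀ ≤ a) (hab : a ≤ b) :
    cutoff c₀ b K - cutoff c₀ a K = cutoff a b K := by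
  ext q
  simp only [Pi.sub_apply, cutoff, indicator, mem_Ioc]
  grind

/-- Adapted bounded processes which are almost everywhere continuous in time: those whose
stochastic integrals are limits of left-point Riemann sums. -/
structure IsRegularIntegrand (μ : Measure Ω) (F : ℝ → MeasurableSpace Ω) (H : ℝ → Ω → ℝ) :
    Prop where
  adapted : ∀ t : ℝ, 0 ≤ t → Measurable[F t] (H t)
  bounded : ∃ C, ∀ t ω, |H t ω| ≤ C
  continuousAt : ∀ᵐ q ∂volume.prod μ, 0 < q.1 → ContinuousAt (fun s => H s q.2) q.1

namespace IsRegularIntegrand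

lemma ae_tendsto_dyadicIntegrand (hH : IsRegularIntegrand μ F H) (ha : 0 ≤ a) (hab : a ≤ b) :
    ∀ᵐ q ∂volume.prod μ, Tendsto (fun n => dyadicIntegrand H K a b n q) atTop
      (nhds (cutoff a b (fun u ω => H u ω * K u ω) q)) := by
  filter_upwards [hH.continuousAt] with q hq
  simp_rw [dyadicIntegrand_apply]
  exact tendsto_sum_indicator_dyadicCell_mul (h := fun s => H s q.2) (f := fun s => K s q.2) hab
    fun hmem => hq (ha.trans_lt hmem.1)

lemma memLp_cutoff_mul (hH : IsRegularIntegrand μ F H) (hF : ∀ t, F t ≤ mΩ) (ha : 0 ≤ a)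
    (hab : a ≤ b) (hK : MemLp (cutoff a b K) 2 (volume.prod μ)) :
    MemLp (cutoff a b fun u ω => H u ω * K u ω) 2 (volume.prod μ) := by
  obtain ⟨C, hC⟩ := hH.bounded
  have hmeas : ∀ t, a ≤ t → Measurable (H t) :=
    fun t ht => (hH.adapted t (ha.trans ht)).mono (hF t) le_rfl
  refine hK.of_le_mul (c := C) (aestronglyMeasurable_of_tendsto_ae atTop
    (aestronglyMeasurable_dyadicIntegrand hab hmeas hK.1)
    (hH.ae_tendsto_dyadicIntegrand ha hab)) (ae_of_all _ fun q => ?_)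
  by_cases hq : q.1 ∈ Ioc a b
  · rw [cutoff_of_mem hq, cutoff_of_mem hq, norm_mul]
    exact mul_le_mul_of_nonneg_right (hC _ _) (norm_nonneg _)
  · simp [cutoff_of_notMem hq]

lemma tendsto_eLpNorm_dyadicIntegrand_sub (hH : IsRegularIntegrand μ F H) (hF : ∀ t, F t ≤ mΩ)
    (ha : 0 ≤ a) (hab : a ≤ b) (hK : MemLp (cutoff a b K) 2 (volume.prod μ)) :
    Tendsto (fun n => eLpNorm (dyadicIntegrand H K a b n - cutoff a b fun u ω => H u ω * K u ω) 2
      (volume.prod μ)) atTop (nhds 0) := by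
  obtain ⟨C, hC⟩ := hH.bounded
  have hmeas : ∀ t, a ≤ t → Measurable (H t) :=
    fun t ht => (hH.adapted t (ha.trans ht)).mono (hF t) le_rfl
  refine tendsto_eLpNorm_zero_of_dominated two_ne_zero ENNReal.ofNat_ne_top
    (fun n => (aestronglyMeasurable_dyadicIntegrand hab hmeas hK.1 n).sub
      (hH.memLp_cutoff_mul hF ha hab hK).1) (hK.norm.const_mul (C + C))
    (fun n => ?_) ?_
  · filter_upwards with q
    rw [add_mul]
    refine (norm_sub_le _ _).trans (add_le_add ?_ ?_)
    · rw [dyadicIntegrand_apply]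
      exact abs_sum_indicator_dyadicCell_mul_le (h := fun s => H s q.2) (f := fun s => K s q.2)
        hab (fun s => hC s q.2) n q.1
    · by_cases hq : q.1 ∈ Ioc a b
      · rw [cutoff_of_mem hq, cutoff_of_mem hq, norm_mul]
        exact mul_le_mul_of_nonneg_right (hC _ _) (norm_nonneg _)
      · simp [cutoff_of_notMem hq]
  · filter_upwards [hH.ae_tendsto_dyadicIntegrand (K := K) ha hab] with q hq
    exact tendsto_sub_nhds_zero_iff.mpr hq

end IsRegularIntegrand

/-- `X = X(0) + ∫ K dW` as a process: every increment of `X`, multiplied by a bounded factor known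
at its left endpoint, is the corresponding Itô integral. -/
def IsItoIntegralProcess (μ : Measure Ω) (F : ℝ → MeasurableSpace Ω) (W K X : ℝ → Ω → ℝ) : Prop :=
  ∀ ⦃a b C : ℝ⦄ ⦃c : Ω → ℝ⦄, 0 ≤ a → a ≤ b → Measurable[F a] c → (∀ ω, |c ω| ≤ C) →
    HasItoIntegral μ F W (cutoff a b fun u ω => c ω * K u ω) (fun ω => c ω * (X b ω - X a ω))

lemma IsBM.isItoIntegralProcess [IsFiniteMeasure μ] (hW : IsBM μ F W) :
    IsItoIntegralProcess μ F W (fun _ _ => 1) W := fun a b C c ha hab hc hC => by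
  simpa only [mul_one] using HasItoIntegral.elementary hW ha hab hc hC

namespace IsItoIntegralProcess

lemma hasItoIntegral_sub (hX : IsItoIntegralProcess μ F W K X) (ha : 0 ≤ a) (hab : a ≤ b) :
    HasItoIntegral μ F W (cutoff a b K) (fun ω => X b ω - X a ω) := by
  simpa only [one_mul] using hX ha hab (c := fun _ => 1) measurable_const (fun _ => abs_one.le)

lemma hasItoIntegral_mul_dyadicSum (hX : IsItoIntegralProcess μ F W K X) (hF : Monotone F)
    (hH : IsRegularIntegrand μ F H) (ha : 0 ≤ a) (hab : a ≤ b) (hc : Measurable[F a] c)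
    (hC : ∀ ω, |c ω| ≤ C) (n : ℕ) :
    HasItoIntegral μ F W (dyadicIntegrand H (fun u ω => c ω * K u ω) a b n)
      (fun ω => c ω * dyadicSum H X a b n ω) := by
  obtain ⟨D, hD⟩ := hH.bounded
  have hterm : ∀ i ∈ Finset.range (2 ^ n), HasItoIntegral μ F W
      (cutoff (dyadicPoint a b n i) (dyadicPoint a b n (i + 1))
        fun u ω => H (dyadicPoint a b n i) ω * (c ω * K u ω))
      (fun ω => c ω * (H (dyadicPoint a b n i) ω *
        (X (dyadicPoint a b n (i + 1)) ω - X (dyadicPoint a b n i) ω))) := fun i _ => by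
    have hleft := le_dyadicPoint hab n i
    simp_rw [mul_left_comm (H _ _), ← mul_assoc (c _)]
    refine hX (ha.trans hleft) (monotone_dyadicPoint hab n i.le_succ)
      ((hc.mono (hF hleft) le_rfl).mul (hH.adapted _ (ha.trans hleft))) (C := C * D) fun ω => ?_
    rw [abs_mul]
    exact mul_le_mul (hC ω) (hD _ ω) (abs_nonneg _) ((abs_nonneg _).trans (hC ω))
  convert HasItoIntegral.sum _ hterm using 1
  · rfl
  · ext ω
    simp only [dyadicSum, Finset.mul_sum, Finset.sum_apply]

lemma hasItoIntegral_dyadicSum (hX : IsItoIntegralProcess μ F W K X) (hF : Monotone F)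
    (hH : IsRegularIntegrand μ F H) (ha : 0 ≤ a) (hab : a ≤ b) (n : ℕ) :
    HasItoIntegral μ F W (dyadicIntegrand H K a b n) (dyadicSum H X a b n) := by
  simpa only [one_mul] using
    hX.hasItoIntegral_mul_dyadicSum hF hH ha hab (c := fun _ => 1) measurable_const
      (fun _ => abs_one.le) n

lemma aestronglyMeasurable_dyadicSum (hX : IsItoIntegralProcess μ F W K X) (hF : Monotone F)
    (hH : IsRegularIntegrand μ F H) (ha : 0 ≤ a) (hab : a ≤ b) (n : ℕ) :
    AEStronglyMeasurable (dyadicSum H X a b n) μ :=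
  let ⟨_, hξ, _⟩ := hX.hasItoIntegral_dyadicSum hF hH ha hab n
  hξ.1

lemma tendstoInMeasure_dyadicSum_of_hasItoIntegral [SFinite μ]
    (hX : IsItoIntegralProcess μ F W K X) (hW : IsBM μ F W) (hH : IsRegularIntegrand μ F H)
    (ha : 0 ≤ a) (hab : a ≤ b) {ξ : Ω → ℝ}
    (hξ : HasItoIntegral μ F W (cutoff a b fun u ω => H u ω * K u ω) ξ) :
    TendstoInMeasure μ (dyadicSum H X a b) atTop ξ :=
  let ⟨hK, _, _⟩ := hX.hasItoIntegral_sub ha hab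
  HasItoIntegral.tendstoInMeasure hW (hX.hasItoIntegral_dyadicSum hW.mono hH ha hab) hξ
    (hH.tendsto_eLpNorm_dyadicIntegrand_sub hW.le ha hab hK)

lemma tendstoInMeasure_dyadicSum [SFinite μ] (hX : IsItoIntegralProcess μ F W K X)
    (hW : IsBM μ F W) (hH : IsRegularIntegrand μ F H) (hJ : IsItoIntegralProcess μ F W L J)
    (hL : ∀ u ω, H u ω * K u ω = L u ω) (ha : 0 ≤ a) (hab : a ≤ b) :
    TendstoInMeasure μ (dyadicSum H X a b) atTop (fun ω => J b ω - J a ω) :=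
  hX.tendstoInMeasure_dyadicSum_of_hasItoIntegral hW hH ha hab <| by
    simpa only [hL] using hJ.hasItoIntegral_sub ha hab

lemma hasItoIntegral_of_isSI [SFinite μ] (hX : IsItoIntegralProcess μ F W K X) (hW : IsBM μ F W)
    (hH : IsRegularIntegrand μ F H) (hI : IsSI μ H X I) (hb : 0 ≤ b) :
    HasItoIntegral μ F W (cutoff 0 b fun u ω => H u ω * K u ω) (I b) := by
  obtain ⟨hK, _, _⟩ := hX.hasItoIntegral_sub le_rfl hb
  refine HasItoIntegral.of_tendsto hW (hX.hasItoIntegral_dyadicSum hW.mono hH le_rfl hb)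
    (hH.memLp_cutoff_mul hW.le le_rfl hb hK)
    (hH.tendsto_eLpNorm_dyadicIntegrand_sub hW.le le_rfl hb hK) ?_
  simpa only [rsum_eq_dyadicSum] using hI.2 b hb

lemma of_isSI [IsFiniteMeasure μ] (hX : IsItoIntegralProcess μ F W K X) (hW : IsBM μ F W)
    (hH : IsRegularIntegrand μ F H) (hI : IsSI μ H X I) :
    IsItoIntegralProcess μ F W (fun u ω => H u ω * K u ω) I := by
  intro a b C c ha hab hc hC
  have hincr : HasItoIntegral μ F W (cutoff a b fun u ω => H u ω * K u ω)
      (fun ω => I b ω - I a ω) := by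
    rw [← cutoff_sub_cutoff ha hab]
    exact (hX.hasItoIntegral_of_isSI hW hH hI (ha.trans hab)).sub
      (hX.hasItoIntegral_of_isSI hW hH hI ha)
  obtain ⟨hK, _, _⟩ := hX ha hab hc hC
  simp_rw [mul_left_comm (c _)]
  exact HasItoIntegral.of_tendsto hW (hX.hasItoIntegral_mul_dyadicSum hW.mono hH ha hab hc hC)
    (hH.memLp_cutoff_mul hW.le ha hab hK)
    (hH.tendsto_eLpNorm_dyadicIntegrand_sub hW.le ha hab hK)
    (tendstoInMeasure_const_mul (hc.mono (hW.le a) le_rfl).aestronglyMeasurable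
      (hX.aestronglyMeasurable_dyadicSum hW.mono hH ha hab)
      (hX.tendstoInMeasure_dyadicSum_of_hasItoIntegral hW hH ha hab hincr))

end IsItoIntegralProcess

lemma IsBM.isItoIntegralProcess_of_isSI [IsFiniteMeasure μ] (hW : IsBM μ F W)
    (hH : IsRegularIntegrand μ F H) (hI : IsSI μ H W I) : IsItoIntegralProcess μ F W H I := by
  simpa only [mul_one] using hW.isItoIntegralProcess.of_isSI hW hH hI

end ItoProcess

section SignProcesses

variable {Ω : Type*} {mΩ : MeasurableSpace Ω} {μ : Measure Ω} {F : ℝ → MeasurableSpace Ω}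

-- `|u|` only serves to make the version jointly measurable at negative times as well.
lemma exists_measurable_uncurry_ae_eq {Z : ℝ → Ω → ℝ} (hcont : ∀ᵐ ω ∂μ, Continuous fun t => Z t ω)
    (hmeas : ∀ t, 0 ≤ t → Measurable (Z t)) :
    ∃ Z' : ℝ × Ω → ℝ, Measurable Z' ∧ ∀ᵐ ω ∂μ, ∀ t, 0 ≤ t → Z' (t, ω) = Z t ω := by
  classical
  set N : Set Ω := toMeasurable μ {ω | ¬ Continuous fun t => Z t ω}
  have hN : ∀ᵐ ω ∂μ, ω ∉ N := measure_eq_zero_iff_ae_notMem.mp <| by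
    rw [measure_toMeasurable]; exact hcont
  refine ⟨Function.uncurry fun u ω => if ω ∈ N then 0 else Z |u| ω,
    measurable_uncurry_of_continuous_of_measurable (fun ω => ?_) fun u =>
      Measurable.ite (measurableSet_toMeasurable _ _) measurable_const (hmeas _ (abs_nonneg u)), ?_⟩
  · by_cases hω : ω ∈ N
    · simpa only [hω, if_true] using continuous_const
    · simp only [hω, if_false]
      exact (not_not.mp fun h => hω (subset_toMeasurable _ _ h)).comp continuous_abs
  · filter_upwards [hN] with ω hω u hu
    simp only [Function.uncurry_apply_pair, hω, if_false, abs_of_nonneg hu]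

namespace IsBangBang

variable [IsProbabilityMeasure μ] {κ y : ℝ} {W Y V : ℝ → Ω → ℝ}

lemma ae_prod_ne_zero (hY : IsBangBang μ F κ y W Y) :
    ∀ᵐ q ∂(volume : Measure ℝ).prod μ, 0 < q.1 → Y q.1 q.2 ≠ 0 := by
  obtain ⟨Y', hY'meas, hY'⟩ := exists_measurable_uncurry_ae_eq
    (hY.path.mono fun _ h => h.continuous) fun t ht => hY.measurable ht
  have hnull : ∀ᵐ q ∂(volume : Measure ℝ).prod μ, q ∉ {q : ℝ × Ω | 0 < q.1 ∧ Y' q = 0} := by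
    have hS : MeasurableSet {q : ℝ × Ω | 0 < q.1 ∧ Y' q = 0} :=
      (measurableSet_lt measurable_const measurable_fst).inter
        (measurableSet_eq_fun hY'meas measurable_const)
    rw [← measure_eq_zero_iff_ae_notMem, Measure.measure_prod_null hS]
    refine Eventually.of_forall fun u => measure_eq_zero_iff_ae_notMem.mpr ?_
    by_cases hu : 0 < u
    · filter_upwards [hY.ae_ne_zero hu, hY'] with ω hne heq hmem
      exact hne (heq u hu.le ▸ hmem.2)
    · exact Eventually.of_forall fun ω hmem => hu hmem.1
  filter_upwards [hnull, (Measure.quasiMeasurePreserving_snd (μ := volume) (ν := μ)).ae hY']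
    with q hq heq hpos hzero
  exact hq ⟨hpos, (heq q.1 hpos.le).trans hzero⟩

lemma ae_ae_ne_zero (hY : IsBangBang μ F κ y W Y) :
    ∀ᵐ ω ∂μ, ∀ᵐ u, 0 < u → Y u ω ≠ 0 :=
  Measure.ae_ae_of_ae_prod <|
    (Measure.measurePreserving_swap (μ := μ) (ν := volume)).quasiMeasurePreserving.ae
      hY.ae_prod_ne_zero

lemma isRegularIntegrand_comp (hY : IsBangBang μ F κ y W Y) {φ : ℝ → ℝ} (hmeas : Measurable φ)
    {C : ℝ} (hC : ∀ x, |φ x| ≤ C) (hcont : ∀ x, x ≠ 0 → ContinuousAt φ x) :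
    IsRegularIntegrand μ F fun s ω => φ (Y s ω) where
  adapted t ht := hmeas.comp (hY.adapted t ht)
  bounded := ⟨C, fun _ _ => hC _⟩
  continuousAt := by
    filter_upwards [hY.ae_prod_ne_zero, (Measure.quasiMeasurePreserving_snd (μ := volume)
      (ν := μ)).ae hY.path] with q hne hpath hpos
    exact (hcont _ (hne hpos)).comp (f := fun s => Y s q.2) hpath.continuous.continuousAt

lemma isRegularIntegrand_psgn (hY : IsBangBang μ F κ y W Y) :
    IsRegularIntegrand μ F fun s ω => psgn (Y s ω) :=
  hY.isRegularIntegrand_comp measurable_psgn (fun x => (abs_psgn x).le) fun _ => continuousAt_psgn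

lemma isRegularIntegrand_ite (hY : IsBangBang μ F κ y W Y) (a b : ℝ) :
    IsRegularIntegrand μ F fun s ω => if Y s ω ≤ 0 then a else b := by
  refine hY.isRegularIntegrand_comp (φ := fun x => if x ≤ 0 then a else b)
    (Measurable.ite measurableSet_Iic measurable_const measurable_const) (C := |a| ⊔ |b|)
    (fun x => by split_ifs <;> simp) fun x hx => ?_
  refine tendsto_const_nhds.congr' ?_
  rcases lt_or_gt_of_ne hx with h | h
  · filter_upwards [Iic_mem_nhds h] with z (hz : z ≤ 0)
    simp only [hz, h.le, if_true]
  · filter_upwards [Ioi_mem_nhds h] with z (hz : 0 < z)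
    simp only [hz.not_ge, h.not_ge, if_false]

lemma signIntegral_ae_eq_add (hY : IsBangBang μ F κ y W Y) {B₁ B₂ I₁ I₂ : ℝ → Ω → ℝ}
    (hB₁ : IsBM μ F B₁) (hB₂ : IsBM μ F B₂) (hV : IsSI μ (fun s ω => psgn (Y s ω)) W V)
    (hI₁ : IsSI μ (fun s ω => if Y s ω ≤ 0 then 0 else 1) B₁ I₁)
    (hI₂ : IsSI μ (fun s ω => if Y s ω ≤ 0 then 1 else 0) B₂ I₂)
    (hW : ∀ᵐ ω ∂μ, ∀ t, 0 ≤ t → W t ω = I₁ t ω - I₂ t ω) {t : ℝ} (ht : 0 ≤ t) :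
    V t =ᵐ[μ] fun ω => I₁ t ω + I₂ t ω := by
  have hproc₁ := hB₁.isItoIntegralProcess_of_isSI (hY.isRegularIntegrand_ite 0 1) hI₁
  have hproc₂ := hB₂.isItoIntegralProcess_of_isSI (hY.isRegularIntegrand_ite 1 0) hI₂
  have hsgn := hY.isRegularIntegrand_ite (-1) 1
  have hneg := hY.isRegularIntegrand_ite 1 (-1)
  have hlim₁ := hproc₁.tendstoInMeasure_dyadicSum hB₁ hsgn
    hproc₁ (fun s ω => by split_ifs <;> simp) le_rfl ht
  have hlim₂ := hproc₂.tendstoInMeasure_dyadicSum hB₂ hneg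
    hproc₂ (fun s ω => by split_ifs <;> simp) le_rfl ht
  have hsum := tendstoInMeasure_map₂ (φ := (· + ·)) (by fun_prop)
    (hproc₁.aestronglyMeasurable_dyadicSum hB₁.mono hsgn le_rfl ht)
    (hproc₂.aestronglyMeasurable_dyadicSum hB₂.mono hneg le_rfl ht) hlim₁ hlim₂
  refine tendstoInMeasure_ae_unique (hV.2 t ht) ((hsum.congr_left fun n => ?_).congr_right ?_)
  · filter_upwards [hW] with ω hω
    rw [rsum_eq_dyadicSum]
    simp only [dyadicSum]
    rw [← Finset.sum_add_distrib]
    refine Finset.sum_congr rfl fun i _ => ?_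
    rw [hω _ (le_dyadicPoint ht n _), hω _ (le_dyadicPoint ht n _), psgn]
    split_ifs <;> grind
  · filter_upwards [hI₁.1, hI₂.1] with ω h₁ h₂
    rw [h₁, h₂, sub_zero, sub_zero]

end IsBangBang

end SignProcesses

section Skorokhod

/-- `R` solves the Skorokhod reflection problem for the free path `Z` on `[0, ∞)`: it is
nonnegative and the regulator `R - Z` starts from `0`, is nondecreasing, and grows only where `R`
vanishes. The last two conditions are imposed at rational times only, so that they can be checked
almost surely. -/
structure IsSkorokhodReflection (Z R : ℝ → ℝ) : Prop where
  continuous_free : Continuous Z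
  continuous : Continuous R
  nonneg : ∀ t, 0 ≤ R t
  initial : R 0 = Z 0
  regulator_le_of_rat : ∀ a b : ℚ, (0 : ℝ) ≤ a → (a : ℝ) ≤ b → R a - Z a ≤ R b - Z b
  regulator_eq_of_rat : ∀ a b : ℚ, (0 : ℝ) ≤ a → (a : ℝ) ≤ b → (∀ u ∈ Icc (a : ℝ) b, R u ≠ 0) →
    R a - Z a = R b - Z b

namespace IsSkorokhodReflection

variable {Z R : ℝ → ℝ} {a b t : ℝ}

lemma continuous_regulator (hR : IsSkorokhodReflection Z R) : Continuous fun u => R u - Z u :=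
  hR.continuous.sub hR.continuous_free

lemma regulator_mono (hR : IsSkorokhodReflection Z R) (ha : 0 ≤ a) (hab : a ≤ b) :
    R a - Z a ≤ R b - Z b := by
  have hcont := hR.continuous_regulator
  have hclosed : ∀ p q : ℝ, R |p| - Z |p| ≤ R (|p| + |q|) - Z (|p| + |q|) := by
    refine fun p q => DenseRange.induction_on₂ (Rat.denseRange_cast (𝕜 := ℝ))
      (p := fun p q => R |p| - Z |p| ≤ R (|p| + |q|) - Z (|p| + |q|)) ?_ (fun p q => ?_) p q
    · exact isClosed_le (hcont.comp (by fun_prop)) (hcont.comp (by fun_prop))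
    · simpa using hR.regulator_le_of_rat |p| (|p| + |q|) (by simp) (by simp)
  simpa [abs_of_nonneg ha, abs_of_nonneg (sub_nonneg.mpr hab)] using hclosed a (b - a)

lemma regulator_eq_of_ne_zero_on_Ioo (hR : IsSkorokhodReflection Z R) (ha : 0 ≤ a) (hab : a ≤ b)
    (hne : ∀ u ∈ Ioo a b, R u ≠ 0) : R b - Z b = R a - Z a := by
  rcases hab.eq_or_lt with rfl | hlt
  · rfl
  obtain ⟨q₀, haq₀, hq₀b⟩ := exists_rat_btwn hlt
  have hrat : Ioo a b ∩ range ((↑) : ℚ → ℝ) ⊆ {u | R u - Z u = R q₀ - Z q₀} := by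
    rintro _ ⟨⟨haq, hqb⟩, q, rfl⟩
    rcases le_total (q : ℝ) q₀ with h | h
    · exact hR.regulator_eq_of_rat q q₀ (ha.trans haq.le) h fun u hu =>
        hne u ⟨haq.trans_le hu.1, hu.2.trans_lt hq₀b⟩
    · exact (hR.regulator_eq_of_rat q₀ q (ha.trans haq₀.le) h fun u hu =>
        hne u ⟨haq₀.trans_le hu.1, hu.2.trans_lt hqb⟩).symm
  have hIcc : Icc a b ⊆ {u | R u - Z u = R q₀ - Z q₀} := by
    have hclosed := isClosed_eq hR.continuous_regulator (continuous_const (y := R q₀ - Z q₀))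
    rw [← closure_Ioo hlt.ne]
    exact closure_minimal ((Rat.denseRange_cast.open_subset_closure_inter isOpen_Ioo).trans
      (closure_minimal hrat hclosed)) hclosed
  exact (hIcc ⟨hab, le_rfl⟩).trans (hIcc ⟨le_rfl, hab⟩).symm

lemma max_neg_le_regulator (hR : IsSkorokhodReflection Z R) (ha : a ∈ Icc 0 t) :
    max 0 (-Z a) ≤ R t - Z t := by
  have hmono := hR.regulator_mono ha.1 ha.2
  have hpos := hR.regulator_mono le_rfl (ha.1.trans ha.2)
  rw [hR.initial, sub_self] at hpos
  exact max_le hpos (by linarith [hR.nonneg a])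

-- The supremum is attained at the last zero of `R` before `t`.
lemma exists_regulator_le_max_neg (hR : IsSkorokhodReflection Z R) (ht : 0 ≤ t) :
    ∃ s ∈ Icc 0 t, R t - Z t ≤ max 0 (-Z s) := by
  by_cases hzero : ∃ u ∈ Icc 0 t, R u = 0
  · obtain ⟨s, ⟨hs, hRs : R s = 0⟩, hlast⟩ := (isCompact_Icc.inter_right
      (isClosed_singleton.preimage hR.continuous)).exists_isGreatest hzero
    refine ⟨s, hs, le_max_of_le_right ?_⟩
    rw [hR.regulator_eq_of_ne_zero_on_Ioo hs.1 hs.2 fun u hu hu0 =>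
      hu.1.not_ge (hlast ⟨⟨hs.1.trans hu.1.le, hu.2.le⟩, hu0⟩), hRs, zero_sub]
  · push Not at hzero
    refine ⟨0, ⟨le_rfl, ht⟩, le_max_of_le_left ?_⟩
    rw [hR.regulator_eq_of_ne_zero_on_Ioo le_rfl ht fun u hu => hzero u ⟨hu.1.le, hu.2.le⟩,
      hR.initial, sub_self]

-- The supremum runs over a countable dense set of times, which makes it measurable in `Z`.
theorem eq_add_iSup (hR : IsSkorokhodReflection Z R) (ht : 0 ≤ t) :
    R t = Z t + ⨆ q : ℚ, max 0 (-Z (projIcc 0 t ht q)) := by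
  have hle : ∀ s : Icc 0 t, max 0 (-Z s) ≤ R t - Z t := fun s => hR.max_neg_le_regulator s.2
  have hdense : DenseRange fun q : ℚ => projIcc 0 t ht q :=
    (projIcc_surjective ht).denseRange.comp Rat.denseRange_cast continuous_projIcc
  obtain ⟨s, hs, hsup⟩ := hR.exists_regulator_le_max_neg ht
  have hZ := hR.continuous_free
  have hge : max 0 (-Z s) ≤ ⨆ q : ℚ, max 0 (-Z (projIcc 0 t ht q)) :=
    hdense.induction_on (p := fun s : Icc 0 t => max 0 (-Z s) ≤ _) ⟨s, hs⟩
      (isClosed_le (by fun_prop) continuous_const)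
      (le_ciSup (f := fun q : ℚ => max 0 (-Z (projIcc 0 t ht q)))
        ⟨_, forall_mem_range.mpr fun q : ℚ => hle (projIcc 0 t ht q)⟩)
  rw [le_antisymm (ciSup_le fun q : ℚ => hle (projIcc 0 t ht q)) (hsup.trans hge)]
  ring

end IsSkorokhodReflection

end Skorokhod

section Tanaka

lemma psgn_eq_psgn_of_ne_zero {Y : ℝ → ℝ} (hY : Continuous Y) {u v : ℝ}
    (hne : ∀ s ∈ uIcc u v, Y s ≠ 0) : psgn (Y u) = psgn (Y v) := by
  have hzero : (0 : ℝ) ∉ uIcc (Y u) (Y v) := fun h0 =>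
    let ⟨s, hs, hs0⟩ := intermediate_value_uIcc hY.continuousOn h0
    hne s hs hs0
  simp only [mem_uIcc, psgn] at hzero ⊢
  grind

/-- Dyadic approximation of the local time at `0` in Tanaka's formula for `|Y|` on `[a, b]`: each
summand is the gap in the convexity inequality `|y'| ≥ sgn(y) y'` between consecutive values. -/
def crossingSum (Y : ℝ → ℝ) (a b : ℝ) (n : ℕ) : ℝ :=
  ∑ i ∈ Finset.range (2 ^ n), (|Y (dyadicPoint a b n (i + 1))| -
    psgn (Y (dyadicPoint a b n i)) * Y (dyadicPoint a b n (i + 1)))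

lemma crossingSum_nonneg (Y : ℝ → ℝ) (a b : ℝ) (n : ℕ) : 0 ≤ crossingSum Y a b n := by
  refine Finset.sum_nonneg fun i _ => sub_nonneg.mpr ((le_abs_self _).trans ?_)
  rw [abs_mul, abs_psgn, one_mul]

lemma crossingSum_eq_zero {Y : ℝ → ℝ} (hY : Continuous Y) {a b : ℝ} (hab : a ≤ b)
    (hne : ∀ u ∈ Icc a b, Y u ≠ 0) (n : ℕ) : crossingSum Y a b n = 0 := by
  refine Finset.sum_eq_zero fun i hi => ?_
  have hi := Finset.mem_range.mp hi
  have hsub : uIcc (dyadicPoint a b n i) (dyadicPoint a b n (i + 1)) ⊆ Icc a b :=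
    uIcc_subset_Icc ⟨le_dyadicPoint hab n i, dyadicPoint_le hab hi.le⟩
      ⟨le_dyadicPoint hab n (i + 1), dyadicPoint_le hab hi⟩
  rw [psgn_eq_psgn_of_ne_zero hY fun s hs => hne s (hsub hs), psgn_mul_self, sub_self]

variable {Ω : Type*} {mΩ : MeasurableSpace Ω} {μ : Measure Ω} {F : ℝ → MeasurableSpace Ω}
  {κ y a b : ℝ}

lemma IsBangBangPath.sum_psgn_mul_sub {w Y : ℝ → ℝ} (hY : IsBangBangPath κ y w Y) (ha : 0 ≤ a)
    (hab : a ≤ b) (n : ℕ) :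
    ∑ i ∈ Finset.range (2 ^ n), psgn (Y (dyadicPoint a b n i)) *
        (w (dyadicPoint a b n (i + 1)) - w (dyadicPoint a b n i)) =
      |Y b| - |Y a| - crossingSum Y a b n + κ * ∑ i ∈ Finset.range (2 ^ n),
        psgn (Y (dyadicPoint a b n i)) *
          ∫ u in (dyadicPoint a b n i)..(dyadicPoint a b n (i + 1)), psgn (Y u) := by
  have htel : |Y b| - |Y a| = ∑ i ∈ Finset.range (2 ^ n),
      (|Y (dyadicPoint a b n (i + 1))| - |Y (dyadicPoint a b n i)|) := by
    rw [Finset.sum_range_sub fun i => |Y (dyadicPoint a b n i)|, dyadicPoint_zero,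
      dyadicPoint_two_pow]
  rw [htel, crossingSum, Finset.mul_sum, ← Finset.sum_sub_distrib, ← Finset.sum_add_distrib]
  refine Finset.sum_congr rfl fun i _ => ?_
  have hincr := hY.sub_eq (ha.trans (le_dyadicPoint hab n i))
    (monotone_dyadicPoint hab n i.le_succ)
  rw [← psgn_mul_self (Y (dyadicPoint a b n i))]
  linear_combination -(psgn (Y (dyadicPoint a b n i)) * hincr)

namespace IsBangBang

variable [IsProbabilityMeasure μ] {W Y V S : ℝ → Ω → ℝ}

lemma ae_exists_tendsto_crossingSum (hY : IsBangBang μ F κ y W Y)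
    (hV : IsSI μ (fun s ω => psgn (Y s ω)) W V) (ha : 0 ≤ a) (hab : a ≤ b) :
    ∀ᵐ ω ∂μ, ∃ k : ℕ → ℕ, Tendsto (fun n => crossingSum (fun u => Y u ω) a b (k n)) atTop
      (nhds (|Y b ω| - |Y a ω| + κ * (b - a) - (V b ω - V a ω))) := by
  have hlim := hY.bm.isItoIntegralProcess.tendstoInMeasure_dyadicSum hY.bm
    hY.isRegularIntegrand_psgn
    (hY.bm.isItoIntegralProcess_of_isSI hY.isRegularIntegrand_psgn hV) (fun _ _ => mul_one _) ha hab
  obtain ⟨k, hk, hsub⟩ := hlim.exists_seq_tendsto_ae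
  filter_upwards [hsub, hY.path, hY.ae_ae_ne_zero] with ω hsub hpath hne
  have hdrift := tendsto_sum_mul_integral_dyadicCell (h := fun u => psgn (Y u ω)) hab
    (fun v => (abs_psgn _).le)
    (hne.mono fun u hu hmem => (continuousAt_psgn (hu (ha.trans_lt hmem.1))).comp
      (f := fun s => Y s ω) hpath.continuous.continuousAt)
    (intervalIntegrable_psgn hpath.continuous a b)
  simp only [psgn_mul_psgn, intervalIntegral.integral_const, smul_eq_mul, mul_one] at hdrift
  refine ⟨k, (((hdrift.comp hk.tendsto_atTop).const_mul κ).const_add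
    (|Y b ω| - |Y a ω|) |>.sub hsub).congr fun n => ?_⟩
  simp only [dyadicSum, Function.comp_apply]
  rw [hpath.sum_psgn_mul_sub ha hab]
  ring

lemma ae_isSkorokhodReflection (hY : IsBangBang μ F κ y W Y)
    (hV : IsSI μ (fun s ω => psgn (Y s ω)) W V) (hS : ∀ᵐ ω ∂μ, Continuous fun t => S t ω)
    (hSV : ∀ t, 0 ≤ t → V t =ᵐ[μ] S t) :
    ∀ᵐ ω ∂μ, IsSkorokhodReflection (fun t => |y| - κ * t + S t ω) (fun t => |Y t ω|) := by
  have hrat : ∀ᵐ ω ∂μ, ∀ a b : ℚ, (0 : ℝ) ≤ a → (a : ℝ) ≤ b →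
      ∃ k : ℕ → ℕ, Tendsto (fun n => crossingSum (fun u => Y u ω) a b (k n)) atTop
        (nhds (|Y b ω| - |Y a ω| + κ * (b - a) - (S b ω - S a ω))) := by
    simp only [ae_all_iff]
    intro a b ha hab
    filter_upwards [hY.ae_exists_tendsto_crossingSum hV ha hab, hSV a ha, hSV b (ha.trans hab)]
      with ω htanaka hSa hSb
    rwa [← hSa, ← hSb]
  filter_upwards [hrat, hS, hY.path, hV.1, hSV 0 le_rfl] with ω hrat hcont hpath hV0 hS0
  refine ⟨by fun_prop, hpath.continuous.abs, fun t => abs_nonneg _, ?_, fun a b ha hab => ?_,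
    fun a b ha hab hne => ?_⟩
  · simp [hpath.initial, ← hS0, hV0]
  · obtain ⟨k, hk⟩ := hrat a b ha hab
    linarith [ge_of_tendsto' hk fun n => crossingSum_nonneg _ _ _ _]
  · obtain ⟨k, hk⟩ := hrat a b ha hab
    simp only [crossingSum_eq_zero hpath.continuous hab fun u hu => abs_ne_zero.mp (hne u hu)] at hk
    linarith [tendsto_nhds_unique hk tendsto_const_nhds]

end IsBangBang

end Tanaka

section FiltrationInclusions

namespace IsBangBang

variable {Ω : Type*} {mΩ : MeasurableSpace Ω} {μ : Measure Ω} {F : ℝ → MeasurableSpace Ω}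
  {κ y : ℝ} {W Y V S : ℝ → Ω → ℝ}

lemma natFilt_le_driver (hY : IsBangBang μ F κ y W Y) (t : ℝ) :
    natFilt μ Y t ≤ natFilt μ W t := by
  refine natFilt_le_natFilt (fun s hs => ?_) t
  refine (containsNullSets_natFilt μ W s).measurable_of_tendsto_ae
    (f := fun n ω => eulerScheme κ y (s / 2 ^ n) (fun u => W u ω) (2 ^ n))
    (fun n => measurable_eulerScheme fun j hj => measurable_natFilt μ W ⟨by positivity, ?_⟩) ?_
  · have hj' : (j : ℝ) ≤ 2 ^ n := mod_cast hj
    calc s / 2 ^ n * j ≤ s / 2 ^ n * 2 ^ n := by gcongr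
      _ = s := by field_simp
  · filter_upwards [hY.path] with ω hpath
    exact hpath.tendsto_eulerScheme hY.drift_nonneg hs

variable [IsProbabilityMeasure μ]

lemma ae_tendsto_sum_psgn (hY : IsBangBang μ F κ y W Y) {t : ℝ} (ht : 0 ≤ t) :
    ∀ᵐ ω ∂μ, Tendsto (fun n : ℕ => ∑ i ∈ Finset.range (2 ^ n),
        psgn (Y (dyadicPoint 0 t n i) ω) *
          (dyadicPoint 0 t n (i + 1) - dyadicPoint 0 t n i)) atTop
      (nhds (∫ s in (0 : ℝ)..t, psgn (Y s ω))) := by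
  filter_upwards [hY.path, hY.ae_ae_ne_zero] with ω hpath hne
  simpa using tendsto_sum_mul_integral_dyadicCell (h := fun u => psgn (Y u ω)) (f := fun _ => 1) ht
    (fun v => (abs_psgn _).le)
    (hne.mono fun u hu hmem => (continuousAt_psgn (hu hmem.1)).comp
      (f := fun s => Y s ω) hpath.continuous.continuousAt) (by simp)

lemma natFilt_driver_le (hY : IsBangBang μ F κ y W Y) (t : ℝ) :
    natFilt μ W t ≤ natFilt μ Y t := by
  refine natFilt_le_natFilt (fun s hs => ?_) t
  refine (containsNullSets_natFilt μ Y s).measurable_of_tendsto_ae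
    (f := fun n ω => Y s ω - y + κ * ∑ i ∈ Finset.range (2 ^ n),
      psgn (Y (dyadicPoint 0 s n i) ω) * (dyadicPoint 0 s n (i + 1) - dyadicPoint 0 s n i))
    (fun n => ?_) ?_
  · refine ((measurable_natFilt μ Y ⟨hs, le_rfl⟩).sub_const y).add
      ((Finset.measurable_fun_sum _ fun i hi => ?_).const_mul κ)
    exact (measurable_psgn.comp (measurable_natFilt μ Y
      ⟨le_dyadicPoint hs n i, dyadicPoint_le hs (Finset.mem_range.mp hi).le⟩)).mul_const _
  · filter_upwards [hY.path, hY.ae_tendsto_sum_psgn hs] with ω hpath hlim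
    have hW : W s ω = Y s ω - y + κ * ∫ u in (0 : ℝ)..s, psgn (Y u ω) := by
      rw [hpath.eq s hs]; ring
    exact hW ▸ (hlim.const_mul κ).const_add _

lemma natFilt_eq_driver (hY : IsBangBang μ F κ y W Y) (t : ℝ) :
    natFilt μ Y t = natFilt μ W t :=
  le_antisymm (hY.natFilt_le_driver t) (hY.natFilt_driver_le t)

lemma natFilt_signIntegral_le (hY : IsBangBang μ F κ y W Y)
    (hV : IsSI μ (fun s ω => psgn (Y s ω)) W V) (t : ℝ) : natFilt μ V t ≤ natFilt μ Y t := by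
  refine natFilt_le_natFilt (fun s hs => ?_) t
  refine (containsNullSets_natFilt μ Y s).measurable_of_tendstoInMeasure (fun n => ?_) (hV.2 s hs)
  rw [rsum_eq_dyadicSum]
  refine measurable_dyadicSum hs (fun r hr => measurable_psgn.comp (measurable_natFilt μ Y hr))
    (fun r hr => ?_) n
  exact (measurable_natFilt μ W hr).mono (hY.natFilt_driver_le s) le_rfl

lemma natFilt_abs_le_signIntegral (hY : IsBangBang μ F κ y W Y)
    (hV : IsSI μ (fun s ω => psgn (Y s ω)) W V) (hS : ∀ᵐ ω ∂μ, Continuous fun t => S t ω)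
    (hSV : ∀ t, 0 ≤ t → V t =ᵐ[μ] S t) (t : ℝ) :
    natFilt μ (fun s ω => |Y s ω|) t ≤ natFilt μ V t := by
  refine natFilt_le_natFilt (fun s hs => ?_) t
  have hSmeas : ∀ r ∈ Icc 0 s, Measurable[natFilt μ V s] (S r) := fun r hr =>
    (containsNullSets_natFilt μ V s).measurable_of_ae_eq (measurable_natFilt μ V hr) (hSV r hr.1)
  have hfree : ∀ r ∈ Icc 0 s, Measurable[natFilt μ V s] fun ω => |y| - κ * r + S r ω :=
    fun r hr => (hSmeas r hr).const_add _
  refine (containsNullSets_natFilt μ V s).measurable_of_ae_eq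
    ((hfree s ⟨hs, le_rfl⟩).add (Measurable.iSup fun q : ℚ =>
      (hfree _ (projIcc 0 s hs q).2).neg.const_sup 0)) ?_
  filter_upwards [hY.ae_isSkorokhodReflection hV hS hSV] with ω hω
  exact (hω.eq_add_iSup hs).symm

end IsBangBang

end FiltrationInclusions

section GaussianIncrements

variable {Ω : Type*} {mΩ : MeasurableSpace Ω} {μ : Measure Ω} {F : ℝ → MeasurableSpace Ω}
  {W : ℝ → Ω → ℝ} {Z : Ω → ℂ} {a b : ℝ}

lemma measurable_coe_circleExp : Measurable fun x : ℝ => (Circle.exp x : ℂ) :=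
  (continuous_subtype_val.comp Circle.exp.continuous).measurable

lemma norm_mul_circleExp (z : ℂ) (x : ℝ) : ‖z * (Circle.exp x : ℂ)‖ = ‖z‖ := by
  rw [norm_mul, Circle.norm_coe, mul_one]

/-- `U` starts at `0`, is adapted to the filtration `F`, and given `F a` each increment
`U b - U a` is a centred Gaussian of variance `b - a`; the conditional law is expressed through
its characteristic function, which survives limits in probability of `U`. -/
structure HasGaussianIncrements (μ : Measure Ω) (F : ℝ → MeasurableSpace Ω)
    (U : ℝ → Ω → ℝ) : Prop where
  le : ∀ t, F t ≤ mΩ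
  mono : Monotone F
  adapted : ∀ t : ℝ, 0 ≤ t → Measurable[F t] (U t)
  init : ∀ᵐ ω ∂μ, U 0 ω = 0
  integral_mul_exp : ∀ a b : ℝ, 0 ≤ a → a ≤ b → ∀ (c : ℝ) (Z : Ω → ℂ), Measurable[F a] Z →
    (∀ ω, ‖Z ω‖ ≤ 1) → ∫ ω, Z ω * (Circle.exp (c * (U b ω - U a ω)) : ℂ) ∂μ =
      (∫ ω, Z ω ∂μ) * Complex.exp (-((b - a) * c ^ 2 / 2 : ℝ))

namespace IsBM

lemma integral_mul_exp (hW : IsBM μ F W) (ha : 0 ≤ a) (hab : a ≤ b) (c : ℝ)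
    (hZ : Measurable[F a] Z) :
    ∫ ω, Z ω * (Circle.exp (c * (W b ω - W a ω)) : ℂ) ∂μ =
      (∫ ω, Z ω ∂μ) * Complex.exp (-((b - a) * c ^ 2 / 2 : ℝ)) := by
  have hexp : Measurable fun x : ℝ => (Circle.exp (c * x) : ℂ) :=
    measurable_coe_circleExp.comp (measurable_const_mul c)
  have hWm := hW.measurable_sub ha hab
  have hindep : IndepFun Z (fun ω => (Circle.exp (c * (W b ω - W a ω)) : ℂ)) μ :=
    (hW.indepFun_sub ha hab hZ).comp measurable_id hexp
  have hcharFun : ∫ ω, (Circle.exp (c * (W b ω - W a ω)) : ℂ) ∂μ =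
      charFun (gaussianReal 0 (b - a).toNNReal) c := by
    rw [← hW.law a b ha hab, charFun_apply_real,
      integral_map hWm.aemeasurable (Continuous.aestronglyMeasurable (by fun_prop))]
    simp
  rw [hindep.integral_fun_mul_eq_mul_integral (hZ.mono (hW.le a) le_rfl).aestronglyMeasurable
    (hexp.comp hWm).aestronglyMeasurable, hcharFun, charFun_gaussianReal,
    Real.coe_toNNReal _ (sub_nonneg.mpr hab)]
  simp

lemma hasGaussianIncrements (hW : IsBM μ F W) : HasGaussianIncrements μ F W where
  le := hW.le
  mono := hW.mono
  adapted _ ht := hW.measurable_of_le ht le_rfl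
  init := hW.init
  integral_mul_exp _ _ ha hab c _ hZ _ := hW.integral_mul_exp ha hab c hZ

-- Split `Z` over `{e = 1}` and `{e = -1}`: the Gaussian law of the increment is symmetric.
lemma integral_mul_exp_sign_mul [IsProbabilityMeasure μ] (hW : IsBM μ F W) (ha : 0 ≤ a)
    (hab : a ≤ b) (c : ℝ) (hZ : Measurable[F a] Z) (hZ_le : ∀ ω, ‖Z ω‖ ≤ 1) {e : Ω → ℝ}
    (he : Measurable[F a] e) (he_abs : ∀ ω, |e ω| = 1) :
    ∫ ω, Z ω * (Circle.exp (c * (e ω * (W b ω - W a ω))) : ℂ) ∂μ =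
      (∫ ω, Z ω ∂μ) * Complex.exp (-((b - a) * c ^ 2 / 2 : ℝ)) := by
  set A : Set Ω := {ω | e ω = 1}
  have hA : MeasurableSet[F a] A := he (measurableSet_singleton 1)
  have hind : ∀ B : Set Ω, MeasurableSet[F a] B → Measurable[F a] (B.indicator Z) :=
    fun B hB => hZ.indicator hB
  have hint : ∀ B : Set Ω, MeasurableSet[F a] B → ∀ d : ℝ,
      Integrable (fun ω => B.indicator Z ω * (Circle.exp (d * (W b ω - W a ω)) : ℂ)) μ :=
    fun B hB d => Integrable.of_bound (((hind B hB).mono (hW.le a) le_rfl).mul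
      (measurable_coe_circleExp.comp
        ((hW.measurable_sub ha hab).const_mul d))).aestronglyMeasurable 1
      (.of_forall fun ω => by
        rw [norm_mul_circleExp]
        exact (norm_indicator_le_norm_self _ _).trans (hZ_le ω))
  have hsplit : ∀ ω, Z ω * (Circle.exp (c * (e ω * (W b ω - W a ω))) : ℂ) =
      A.indicator Z ω * (Circle.exp (c * (W b ω - W a ω)) : ℂ) +
        Aᶜ.indicator Z ω * (Circle.exp (-c * (W b ω - W a ω)) : ℂ) := by
    intro ω
    by_cases hω : ω ∈ A
    · simp [hω, show e ω = 1 from hω]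
    · rw [(eq_or_eq_neg_of_abs_eq (he_abs ω)).resolve_left hω, neg_one_mul, mul_neg, ← neg_mul]
      simp [hω]
  have hZ_int : ∀ B : Set Ω, MeasurableSet[F a] B → Integrable (B.indicator Z) μ :=
    fun B hB => by simpa using hint B hB 0
  have hadd : ∫ ω, Z ω ∂μ = ∫ ω, A.indicator Z ω ∂μ + ∫ ω, Aᶜ.indicator Z ω ∂μ := by
    rw [← integral_add (hZ_int A hA) (hZ_int Aᶜ hA.compl)]
    exact integral_congr_ae (.of_forall fun ω => (indicator_self_add_compl_apply A Z ω).symm)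
  simp only [hsplit]
  rw [integral_add (hint A hA c) (hint Aᶜ hA.compl (-c)), hW.integral_mul_exp ha hab c (hind A hA),
    hW.integral_mul_exp ha hab (-c) (hind Aᶜ hA.compl), hadd, neg_sq, add_mul]

lemma measurable_sum_mul_sub (hW : IsBM μ F W) {p : ℕ → ℝ} (hp₀ : 0 ≤ p 0) (hp : Monotone p)
    {e : ℕ → Ω → ℝ} (he : ∀ i, Measurable[F (p i)] (e i)) (k : ℕ) :
    Measurable[F (p k)] fun ω =>
      ∑ i ∈ Finset.range k, e i ω * (W (p (i + 1)) ω - W (p i) ω) := by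
  refine Finset.measurable_fun_sum _ fun i hi => ?_
  have hik : i + 1 ≤ k := Finset.mem_range.mp hi
  have hpos : ∀ j, 0 ≤ p j := fun j => hp₀.trans (hp j.zero_le)
  exact ((he i).mono (hW.mono (hp (i.le_succ.trans hik))) le_rfl).mul
    ((hW.measurable_of_le (hpos _) (hp hik)).sub
      (hW.measurable_of_le (hpos _) (hp (i.le_succ.trans hik))))

lemma integral_mul_exp_sum_sign_mul [IsProbabilityMeasure μ] (hW : IsBM μ F W) {p : ℕ → ℝ}
    (hp₀ : 0 ≤ p 0) (hp : Monotone p) {e : ℕ → Ω → ℝ} (he : ∀ i, Measurable[F (p i)] (e i))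
    (he_abs : ∀ i ω, |e i ω| = 1) (c : ℝ) (hZ : Measurable[F (p 0)] Z)
    (hZ_le : ∀ ω, ‖Z ω‖ ≤ 1) (k : ℕ) :
    ∫ ω, Z ω * (Circle.exp (c * ∑ i ∈ Finset.range k,
        e i ω * (W (p (i + 1)) ω - W (p i) ω)) : ℂ) ∂μ =
      (∫ ω, Z ω ∂μ) * Complex.exp (-((p k - p 0) * c ^ 2 / 2 : ℝ)) := by
  induction k with
  | zero => simp
  | succ k ih =>
    have hZk : Measurable[F (p k)] fun ω => Z ω * (Circle.exp (c * ∑ i ∈ Finset.range k,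
        e i ω * (W (p (i + 1)) ω - W (p i) ω)) : ℂ) :=
      (hZ.mono (hW.mono (hp k.zero_le)) le_rfl).mul (measurable_coe_circleExp.comp
        ((hW.measurable_sum_mul_sub hp₀ hp he k).const_mul c))
    have hstep := hW.integral_mul_exp_sign_mul (hp₀.trans (hp k.zero_le)) (hp k.le_succ) c hZk
      (fun ω => (norm_mul_circleExp _ _).trans_le (hZ_le ω)) (he k) (he_abs k)
    rw [ih, mul_assoc, ← Complex.exp_add] at hstep
    simp only [Finset.sum_range_succ, mul_add, Circle.exp_add, Circle.coe_mul,
      ← mul_assoc] at hstep ⊢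
    rw [hstep]
    congr 2
    push_cast
    ring

end IsBM

namespace HasGaussianIncrements

variable {U U' : ℝ → Ω → ℝ}

lemma measurable (hU : HasGaussianIncrements μ F U) (u : NNReal) : Measurable (U u) :=
  (hU.adapted u u.2).mono (hU.le u) le_rfl

lemma integral_exp_const_mul (hU : HasGaussianIncrements μ F U) (b : NNReal) (c : ℝ) :
    ∫ ω, (Circle.exp (c * U b ω) : ℂ) ∂μ =
      (∫ _, (1 : ℂ) ∂μ) * Complex.exp (-((b - 0 : ℝ) * c ^ 2 / 2 : ℝ)) := by
  rw [← hU.integral_mul_exp 0 b le_rfl b.2 c (fun _ => 1) measurable_const (by simp)]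
  refine integral_congr_ae ?_
  filter_upwards [hU.init] with ω hω
  simp [hω]

-- `c b * U b = c b * (U b - U a) + c b * U a` moves the last coefficient onto the last time of `s`.
lemma integral_exp_sum_insert (hU : HasGaussianIncrements μ F U) {s : Finset NNReal}
    (hs : s.Nonempty) {b : NNReal} (hb : ∀ u ∈ s, u < b) (c : NNReal → ℝ) :
    ∫ ω, (Circle.exp (∑ u ∈ insert b s, c u * U u ω) : ℂ) ∂μ =
      (∫ ω, (Circle.exp (∑ u ∈ s, (c u + if u = s.max' hs then c b else 0) * U u ω) : ℂ) ∂μ) *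
        Complex.exp (-((b - s.max' hs : ℝ) * c b ^ 2 / 2 : ℝ)) := by
  have hmem := s.max'_mem hs
  rw [← hU.integral_mul_exp (s.max' hs) b (s.max' hs).2 (mod_cast (hb _ hmem).le) (c b)
    (fun ω => (Circle.exp (∑ u ∈ s, (c u + if u = s.max' hs then c b else 0) * U u ω) : ℂ))
    (measurable_coe_circleExp.comp (Finset.measurable_fun_sum _ fun u hu => ?_))
    (fun ω => (Circle.norm_coe _).le)]
  · congr 1 with ω
    rw [← Circle.coe_mul, ← Circle.exp_add, Finset.sum_insert fun h => (hb b h).false]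
    simp only [add_mul, Finset.sum_add_distrib, ite_mul, zero_mul, Finset.sum_ite_eq', hmem,
      if_true]
    ring_nf
  · exact ((hU.adapted u u.2).mono (hU.mono (mod_cast s.le_max' u hu)) le_rfl).const_mul _

lemma integral_exp_sum_eq (hU : HasGaussianIncrements μ F U) (hU' : HasGaussianIncrements μ F U')
    (s : Finset NNReal) (c : NNReal → ℝ) :
    ∫ ω, (Circle.exp (∑ u ∈ s, c u * U u ω) : ℂ) ∂μ =
      ∫ ω, (Circle.exp (∑ u ∈ s, c u * U' u ω) : ℂ) ∂μ := by
  induction s using Finset.induction_on_max generalizing c with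
  | empty => simp
  | insert b s hb ih =>
    rcases s.eq_empty_or_nonempty with rfl | hs
    · simp only [insert_empty_eq, Finset.sum_singleton]
      rw [hU.integral_exp_const_mul, hU'.integral_exp_const_mul]
    · rw [hU.integral_exp_sum_insert hs hb, hU'.integral_exp_sum_insert hs hb, ih]

lemma charFunDual_map_restrict (hU : HasGaussianIncrements μ F U) (I : Finset NNReal)
    (L : StrongDual ℝ (I → ℝ)) :
    charFunDual (μ.map fun ω => I.restrict fun u : NNReal => U u ω) L =
      ∫ ω, (Circle.exp (∑ u ∈ I, L (fun v => if u = v then 1 else 0) * U u ω) : ℂ) ∂μ := by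
  have hmeas : Measurable fun ω => I.restrict fun u : NNReal => U u ω :=
    measurable_pi_lambda _ fun u => hU.measurable u
  rw [charFunDual_apply, integral_map hmeas.aemeasurable
    (Continuous.aestronglyMeasurable (by fun_prop))]
  congr 1 with ω
  have hL : L (I.restrict fun u : NNReal => U u ω) =
      ∑ u ∈ I, L (fun v => if u = v then 1 else 0) * U u ω := by
    rw [← L.coe_coe, L.toLinearMap.pi_apply_eq_sum_univ, ← Finset.sum_coe_sort I]
    simp only [Subtype.ext_iff, Finset.restrict, smul_eq_mul, mul_comm, L.coe_coe]
  rw [hL, Circle.coe_exp]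

lemma map_eq [IsProbabilityMeasure μ] (hU : HasGaussianIncrements μ F U)
    (hU' : HasGaussianIncrements μ F U') :
    μ.map (fun ω (u : NNReal) => U u ω) = μ.map (fun ω (u : NNReal) => U' u ω) := by
  refine (map_eq_iff_forall_finset_map_restrict_eq
    (X := fun (u : NNReal) ω => U u ω) (Y := fun (u : NNReal) ω => U' u ω)
    (measurable_pi_lambda _ hU.measurable).aemeasurable
    (measurable_pi_lambda _ hU'.measurable).aemeasurable).mpr fun I => ?_
  refine Measure.ext_of_charFunDual (funext fun L => ?_)
  rw [hU.charFunDual_map_restrict, hU'.charFunDual_map_restrict, hU.integral_exp_sum_eq hU']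

end HasGaussianIncrements

end GaussianIncrements

section ReflectedPaths

variable {e f k w w' : ℝ → ℝ} {a b τ u : ℝ}

/-- The path `w` reflected at time `τ`: its increments after `τ` change sign. -/
def reflectAt (τ : ℝ) (w : ℝ → ℝ) (u : ℝ) : ℝ := 2 * w (min u τ) - w u

lemma reflectAt_of_le (h : u ≤ τ) : reflectAt τ w u = w u := by
  rw [reflectAt, min_eq_left h]
  ring

lemma reflectAt_of_ge (h : τ ≤ u) : reflectAt τ w u = 2 * w τ - w u := by
  rw [reflectAt, min_eq_right h]

lemma continuous_reflectAt (τ : ℝ) (hw : Continuous w) : Continuous (reflectAt τ w) := by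
  unfold reflectAt
  fun_prop

/-- The sign path `e` takes the value `1` on `[0, τ)` and `-1` on `[τ, ∞)`. -/
structure SwitchesSignAt (e : ℝ → ℝ) (τ : ℝ) : Prop where
  nonneg : 0 ≤ τ
  eq_one : ∀ u, 0 ≤ u → u < τ → e u = 1
  eq_neg_one : ∀ u, τ ≤ u → e u = -1

/-- The increments of `w` over short intervals are those of `w'` multiplied by the sign `e`, up to
an error which is negligible in Riemann sums with bounded integrands on `[0, ∞)`. -/
def IncrementsEqSignMul (e w w' : ℝ → ℝ) : Prop :=
  ∀ k : ℝ → ℝ, (∀ u, |k u| ≤ 1) → ∀ a b : ℝ, 0 ≤ a → a ≤ b →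
    Tendsto (fun n : ℕ => ∑ i ∈ Finset.range (2 ^ n), k (dyadicPoint a b n i) *
      ((w (dyadicPoint a b n (i + 1)) - w (dyadicPoint a b n i)) - e (dyadicPoint a b n i) *
        (w' (dyadicPoint a b n (i + 1)) - w' (dyadicPoint a b n i)))) atTop (nhds 0)

namespace SwitchesSignAt

lemma sub_sub_mul_reflectAt_eq_zero (he : SwitchesSignAt e τ) (ha : 0 ≤ a) (hab : a ≤ b)
    (hτ : τ ∉ Ioc a b) : (w b - w a) - e a * (reflectAt τ w b - reflectAt τ w a) = 0 := by
  rcases le_or_gt τ a with hτa | hτa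
  · rw [he.eq_neg_one a hτa, reflectAt_of_ge hτa, reflectAt_of_ge (hτa.trans hab)]
    ring
  · have hτb : b ≤ τ := le_of_not_ge fun h => hτ ⟨hτa, h⟩
    rw [he.eq_one a ha hτa, reflectAt_of_le hτa.le, reflectAt_of_le hτb]
    ring

lemma abs_le_one (he : SwitchesSignAt e τ) (hu : 0 ≤ u) : |e u| ≤ 1 := by
  rcases lt_or_ge u τ with h | h
  · simp [he.eq_one u hu h]
  · simp [he.eq_neg_one u h]

-- Only the cell containing `τ` contributes, and by continuity its contribution vanishes.
lemma incrementsEqSignMul_reflectAt (he : SwitchesSignAt e τ) (hw : Continuous w) :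
    IncrementsEqSignMul e w (reflectAt τ w) := by
  intro k hk a b ha hab
  have hpos : ∀ n i, 0 ≤ dyadicPoint a b n i := fun n i => ha.trans (le_dyadicPoint hab n i)
  have hoff : ∀ n i, τ ∉ dyadicCell a b n i → k (dyadicPoint a b n i) *
      ((w (dyadicPoint a b n (i + 1)) - w (dyadicPoint a b n i)) - e (dyadicPoint a b n i) *
        (reflectAt τ w (dyadicPoint a b n (i + 1)) - reflectAt τ w (dyadicPoint a b n i))) = 0 :=
    fun n i hi => by
      rw [he.sub_sub_mul_reflectAt_eq_zero (hpos n i) (monotone_dyadicPoint hab n i.le_succ) hi,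
        mul_zero]
  by_cases hτ : τ ∈ Ioc a b
  · choose j hj_lt hj using exists_mem_dyadicCell hτ
    have hleft := tendsto_dyadicPoint_of_mem_dyadicCell hj
    have hright : Tendsto (fun n => dyadicPoint a b n (j n + 1)) atTop (nhds τ) := by
      simpa [dyadicPoint_succ] using hleft.add (tendsto_div_two_pow (b - a))
    have hosc : ∀ {v : ℝ → ℝ}, Continuous v → Tendsto (fun n =>
        v (dyadicPoint a b n (j n + 1)) - v (dyadicPoint a b n (j n))) atTop (nhds 0) :=
      fun {v} hv => by
        simpa using ((hv.tendsto τ).comp hright).sub ((hv.tendsto τ).comp hleft)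
    have hcell := (hosc hw).sub (bdd_le_mul_tendsto_zero' 1
      (.of_forall fun n => he.abs_le_one (hpos n (j n))) (hosc (continuous_reflectAt τ hw)))
    rw [sub_zero] at hcell
    refine (bdd_le_mul_tendsto_zero' 1 (.of_forall fun n => hk (dyadicPoint a b n (j n)))
      hcell).congr fun n => ?_
    exact (Finset.sum_eq_single_of_mem (j n) (Finset.mem_range.mpr (hj_lt n))
      fun i _ hij => hoff n i fun hi => hij (dyadicCell_inj hab hi (hj n))).symm
  · refine tendsto_const_nhds.congr fun n => (Finset.sum_eq_zero fun i hi => hoff n i ?_).symm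
    exact fun hmem => hτ (dyadicCell_subset hab (Finset.mem_range.mp hi) hmem)

end SwitchesSignAt

lemma incrementsEqSignMul_self (he : ∀ u, 0 ≤ u → e u = 1) : IncrementsEqSignMul e w w := by
  intro k _ a b ha hab
  refine tendsto_const_nhds.congr fun n => (Finset.sum_eq_zero fun i _ => ?_).symm
  rw [he _ (ha.trans (le_dyadicPoint hab n i))]
  ring

namespace IncrementsEqSignMul

lemma tendsto_sum_sign_mul (h : IncrementsEqSignMul e w w') (he : ∀ u, |e u| = 1) (ha : 0 ≤ a)
    (hab : a ≤ b) :
    Tendsto (fun n : ℕ => ∑ i ∈ Finset.range (2 ^ n), e (dyadicPoint a b n i) *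
      (w (dyadicPoint a b n (i + 1)) - w (dyadicPoint a b n i))) atTop (nhds (w' b - w' a)) := by
  have he_sq : ∀ u, e u * e u = 1 := fun u => by rw [← abs_mul_abs_self, he u, one_mul]
  have hlim := (h e (fun u => (he u).le) a b ha hab).add_const (w' b - w' a)
  rw [zero_add] at hlim
  refine hlim.congr fun n => ?_
  have htelescope := Finset.sum_range_sub (fun i => w' (dyadicPoint a b n i)) (2 ^ n)
  rw [dyadicPoint_two_pow, dyadicPoint_zero] at htelescope
  rw [← htelescope, ← Finset.sum_add_distrib]
  refine Finset.sum_congr rfl fun i _ => ?_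
  rw [mul_sub, ← mul_assoc, he_sq, one_mul, sub_add_cancel]

-- Relating `k` and `k'` at positive times only is enough: the first increment tends to `0`.
lemma tendsto_sum_sub_sum (h : IncrementsEqSignMul e w w') (hw' : Continuous w') {k' : ℝ → ℝ}
    (hk : ∀ u, |k u| ≤ 1) (hb : 0 ≤ b) (hkk' : ∀ n i, 0 < dyadicPoint 0 b n i →
      k' (dyadicPoint 0 b n i) = e (dyadicPoint 0 b n i) * k (dyadicPoint 0 b n i)) :
    Tendsto (fun n : ℕ => ∑ i ∈ Finset.range (2 ^ n), k (dyadicPoint 0 b n i) *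
        (w (dyadicPoint 0 b n (i + 1)) - w (dyadicPoint 0 b n i)) -
      ∑ i ∈ Finset.range (2 ^ n), k' (dyadicPoint 0 b n i) *
        (w' (dyadicPoint 0 b n (i + 1)) - w' (dyadicPoint 0 b n i))) atTop (nhds 0) := by
  have hfirst : Tendsto (fun n : ℕ => (e 0 * k 0 - k' 0) * (w' (b / 2 ^ n) - w' 0)) atTop
      (nhds 0) := by
    simpa using (((hw'.tendsto 0).comp (tendsto_div_two_pow b)).sub_const (w' 0)).const_mul
      (e 0 * k 0 - k' 0)
  have hlim := (h k hk 0 b le_rfl hb).add hfirst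
  rw [add_zero] at hlim
  refine hlim.congr fun n => ?_
  have hdiff : ∑ i ∈ Finset.range (2 ^ n), (e (dyadicPoint 0 b n i) * k (dyadicPoint 0 b n i) -
      k' (dyadicPoint 0 b n i)) * (w' (dyadicPoint 0 b n (i + 1)) - w' (dyadicPoint 0 b n i)) =
      (e 0 * k 0 - k' 0) * (w' (b / 2 ^ n) - w' 0) := by
    rw [Finset.sum_eq_single_of_mem 0 (Finset.mem_range.mpr (by positivity)) fun i _ hi => ?_,
      dyadicPoint_succ, dyadicPoint_zero, zero_add, sub_zero]
    rcases (le_dyadicPoint hb n i).eq_or_lt with hzero | hpos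
    · have hb₀ : b = 0 := by simpa [dyadicPoint, hi] using hzero.symm
      simp [hb₀, dyadicPoint]
    · rw [hkk' n i hpos, sub_self, zero_mul]
  rw [← hdiff, ← Finset.sum_add_distrib, ← Finset.sum_sub_distrib]
  exact Finset.sum_congr rfl fun i _ => by ring

end IncrementsEqSignMul

/-- The sign which turns to `-1` at the first zero of `f` on `[0, ∞)`. The infimum over the
rationals, clamped to `[0, u]`, expresses the existence of a zero of a continuous `f` on `[0, u]`
through countably many values of `f`. -/
def reflectionSign (f : ℝ → ℝ) (u : ℝ) : ℝ :=
  if ⨅ q : ℚ, |f (max 0 (min q u))| = 0 then -1 else 1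

lemma abs_reflectionSign (f : ℝ → ℝ) (u : ℝ) : |reflectionSign f u| = 1 := by
  unfold reflectionSign
  split_ifs <;> simp

lemma measurable_reflectionSign {Ω : Type*} {_ : MeasurableSpace Ω} {Y : ℝ → Ω → ℝ} (hu : 0 ≤ u)
    (hY : ∀ s ∈ Icc 0 u, Measurable (Y s)) :
    Measurable fun ω => reflectionSign (fun t => Y t ω) u := by
  have hinf : Measurable fun ω => ⨅ q : ℚ, |Y (max 0 (min q u)) ω| :=
    Measurable.iInf fun q => (hY _ ⟨le_max_left _ _, max_le hu (min_le_right _ _)⟩).abs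
  exact Measurable.ite (hinf (measurableSet_singleton 0)) measurable_const measurable_const

lemma iInf_abs_clamp_eq_zero_iff (hf : Continuous f) (hu : 0 ≤ u) :
    ⨅ q : ℚ, |f (max 0 (min q u))| = 0 ↔ ∃ s ∈ Icc 0 u, f s = 0 := by
  have hbdd : BddBelow (range fun q : ℚ => |f (max 0 (min q u))|) :=
    ⟨0, forall_mem_range.mpr fun _ => abs_nonneg _⟩
  constructor
  · intro hinf
    obtain ⟨s, hs, hmin⟩ := isCompact_Icc.exists_isMinOn (nonempty_Icc.mpr hu) hf.abs.continuousOn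
    have hle : |f s| ≤ ⨅ q : ℚ, |f (max 0 (min q u))| :=
      le_ciInf fun q => hmin ⟨le_max_left _ _, max_le hu (min_le_right _ _)⟩
    exact ⟨s, hs, abs_nonpos_iff.mp (hle.trans_eq hinf)⟩
  · rintro ⟨s, hs, hzero⟩
    refine le_antisymm ?_ (Real.iInf_nonneg fun _ => abs_nonneg _)
    have hle : ∀ v : ℝ, ⨅ q : ℚ, |f (max 0 (min q u))| ≤ |f (max 0 (min v u))| := fun v =>
      Rat.denseRange_cast.induction_on v
        (isClosed_le continuous_const (by fun_prop)) fun q => ciInf_le hbdd q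
    simpa [hs.1, hs.2, hzero] using hle s

lemma reflectionSign_eq_one (hf : Continuous f) (hu : 0 ≤ u) (hne : ∀ s ∈ Icc 0 u, f s ≠ 0) :
    reflectionSign f u = 1 :=
  if_neg fun h => by
    obtain ⟨s, hs, hzero⟩ := (iInf_abs_clamp_eq_zero_iff hf hu).mp h
    exact hne s hs hzero

lemma reflectionSign_eq_neg_one (hf : Continuous f) {s : ℝ} (hs : s ∈ Icc 0 u) (hzero : f s = 0) :
    reflectionSign f u = -1 :=
  if_pos ((iInf_abs_clamp_eq_zero_iff hf (hs.1.trans hs.2)).mpr ⟨s, hs, hzero⟩)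

lemma reflectionSign_eq_one_or_exists_switchesSignAt (hf : Continuous f) :
    (∀ u, 0 ≤ u → reflectionSign f u = 1) ∨
      ∃ τ, f τ = 0 ∧ SwitchesSignAt (reflectionSign f) τ := by
  rcases (Ici 0 ∩ f ⁻¹' {0}).eq_empty_or_nonempty with hempty | hne
  · refine .inl fun u hu => reflectionSign_eq_one hf hu fun s hs hzero => ?_
    exact (hempty.subset ⟨hs.1, hzero⟩ : s ∈ (∅ : Set ℝ))
  · have hbdd : BddBelow (Ici 0 ∩ f ⁻¹' {0}) := bddBelow_Ici.mono inter_subset_left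
    obtain ⟨hτ₀, hτ⟩ := (isClosed_Ici.inter (isClosed_singleton.preimage hf)).csInf_mem hne hbdd
    refine .inr ⟨_, hτ, hτ₀, fun u hu huτ => ?_, fun u hu => ?_⟩
    · exact reflectionSign_eq_one hf hu fun s hs hzero =>
        (hs.2.trans_lt huτ).not_ge (csInf_le hbdd ⟨hs.1, hzero⟩)
    · exact reflectionSign_eq_neg_one hf ⟨hτ₀, hu⟩ hτ

lemma SwitchesSignAt.reflectAt_eq_mul (he : SwitchesSignAt e τ) (hτ : f τ = 0) (hu : 0 ≤ u) :
    reflectAt τ f u = e u * f u := by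
  rcases lt_or_ge u τ with h | h
  · rw [reflectAt_of_le h.le, he.eq_one u hu h, one_mul]
  · rw [reflectAt_of_ge h, he.eq_neg_one u h, hτ]
    ring

lemma integral_psgn_reflectAt_of_ge (hf : Continuous f) (hτ₀ : 0 ≤ τ) (hτ : f τ = 0)
    (hne : ∀ᵐ u, 0 < u → f u ≠ 0) (hu : τ ≤ u) :
    ∫ s in (0 : ℝ)..u, psgn (reflectAt τ f s) =
      (∫ s in (0 : ℝ)..τ, psgn (f s)) - ∫ s in τ..u, psgn (f s) := by
  have hint := intervalIntegrable_psgn (continuous_reflectAt τ hf)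
  rw [← intervalIntegral.integral_add_adjacent_intervals (hint 0 τ) (hint τ u), sub_eq_add_neg,
    ← intervalIntegral.integral_neg]
  congr 1
  · refine intervalIntegral.integral_congr fun s hs => ?_
    rw [uIcc_of_le hτ₀] at hs
    simp only [reflectAt_of_le hs.2]
  · refine intervalIntegral.integral_congr_ae ?_
    filter_upwards [hne] with s hs hmem
    rw [uIoc_of_le hu] at hmem
    rw [reflectAt_of_ge hmem.1.le, hτ, mul_zero, zero_sub, psgn_neg (hs (hτ₀.trans_lt hmem.1))]

lemma IsBangBangPath.reflect {κ y : ℝ} (h : IsBangBangPath κ y w f) (hτ₀ : 0 ≤ τ)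
    (hτ : f τ = 0) (hne : ∀ᵐ u, 0 < u → f u ≠ 0) :
    IsBangBangPath κ y (reflectAt τ w) (reflectAt τ f) where
  driver_zero := by rw [reflectAt_of_le hτ₀, h.driver_zero]
  continuous := continuous_reflectAt τ h.continuous
  eq u hu := by
    rcases le_total u τ with huτ | hτu
    · rw [reflectAt_of_le huτ, reflectAt_of_le huτ, h.eq u hu]
      congr 3
      refine intervalIntegral.integral_congr fun s hs => ?_
      rw [uIcc_of_le hu] at hs
      simp only [reflectAt_of_le (hs.2.trans huτ)]
    · have hafter := h.sub_eq hτ₀ hτu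
      have hbefore := h.eq τ hτ₀
      rw [integral_psgn_reflectAt_of_ge h.continuous hτ₀ hτ hne hτu, reflectAt_of_ge hτu,
        reflectAt_of_ge hτu]
      linear_combination hbefore - hafter

/-- `(w', f')` arises from the solution `(w, f)` of the equation of `IsBangBangPath` by reflecting
both paths at the first zero of `f`. -/
structure IsReflectedSolution (κ y : ℝ) (w f w' f' : ℝ → ℝ) : Prop where
  continuous_driver : Continuous w'
  isBangBangPath : IsBangBangPath κ y w' f'
  increments : IncrementsEqSignMul (reflectionSign f) w w'
  eq_sign_mul : ∀ u, 0 ≤ u → f' u = reflectionSign f u * f u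

lemma IsBangBangPath.exists_isReflectedSolution {κ y : ℝ} (h : IsBangBangPath κ y w f)
    (hw : Continuous w) (hne : ∀ᵐ u, 0 < u → f u ≠ 0) :
    ∃ w' f', IsReflectedSolution κ y w f w' f' := by
  rcases reflectionSign_eq_one_or_exists_switchesSignAt h.continuous with hone | ⟨τ, hτ, hswitch⟩
  · exact ⟨w, f, hw, h, incrementsEqSignMul_self hone, fun u hu => by rw [hone u hu, one_mul]⟩
  · exact ⟨reflectAt τ w, reflectAt τ f, continuous_reflectAt τ hw,
      h.reflect hswitch.nonneg hτ hne, hswitch.incrementsEqSignMul_reflectAt hw,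
      fun u hu => hswitch.reflectAt_eq_mul hτ hu⟩

end ReflectedPaths

section ReflectedDriver

variable {Ω : Type*} {mΩ : MeasurableSpace Ω} {μ : Measure Ω} {F : ℝ → MeasurableSpace Ω}
  {κ y : ℝ} {W Y : ℝ → Ω → ℝ}

/-- The driving process `W` reflected at the first zero of `Y`, as the integral against `W` of the
sign of `reflectionSign`. Taking the upper limit of Riemann sums makes it adapted. -/
def reflectedDriver (Y W : ℝ → Ω → ℝ) (u : ℝ) (ω : Ω) : ℝ :=
  limsup (fun n => dyadicSum (fun s ω => reflectionSign (fun t => Y t ω) s) W 0 u n ω) atTop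

lemma IsReflectedSolution.reflectedDriver_eq {ω : Ω} {w' f' : ℝ → ℝ}
    (h : IsReflectedSolution κ y (fun t => W t ω) (fun t => Y t ω) w' f') {u : ℝ} (hu : 0 ≤ u) :
    reflectedDriver Y W u ω = w' u := by
  have hlim := h.increments.tendsto_sum_sign_mul (abs_reflectionSign _) le_rfl hu
  rw [h.isBangBangPath.driver_zero, sub_zero] at hlim
  exact hlim.limsup_eq

namespace IsBangBang

lemma measurable_reflectionSign_of_le (hY : IsBangBang μ F κ y W Y) {s u : ℝ} (hs : 0 ≤ s)
    (hsu : s ≤ u) : Measurable[F u] fun ω => reflectionSign (fun t => Y t ω) s :=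
  measurable_reflectionSign hs fun r hr =>
    (hY.adapted r hr.1).mono (hY.bm.mono (hr.2.trans hsu)) le_rfl

lemma adapted_reflectedDriver (hY : IsBangBang μ F κ y W Y) {u : ℝ} (hu : 0 ≤ u) :
    Measurable[F u] (reflectedDriver Y W u) :=
  Measurable.limsup fun n => measurable_dyadicSum hu
    (fun _ hs => hY.measurable_reflectionSign_of_le hs.1 hs.2)
    (fun _ hs => hY.bm.measurable_of_le hs.1 hs.2) n

variable [IsProbabilityMeasure μ]

lemma ae_exists_isReflectedSolution (hY : IsBangBang μ F κ y W Y) :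
    ∀ᵐ ω ∂μ, ∃ w' f', IsReflectedSolution κ y (fun t => W t ω) (fun t => Y t ω) w' f' := by
  filter_upwards [hY.path, hY.bm.cont, hY.ae_ae_ne_zero] with ω hpath hcont hne
  exact hpath.exists_isReflectedSolution hcont hne

lemma integral_mul_exp_reflectedDriver (hY : IsBangBang μ F κ y W Y) {a b : ℝ} (ha : 0 ≤ a)
    (hab : a ≤ b) (c : ℝ) {Z : Ω → ℂ} (hZ : Measurable[F a] Z) (hZ_le : ∀ ω, ‖Z ω‖ ≤ 1) :
    ∫ ω, Z ω * (Circle.exp (c * (reflectedDriver Y W b ω - reflectedDriver Y W a ω)) : ℂ) ∂μ =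
      (∫ ω, Z ω ∂μ) * Complex.exp (-((b - a) * c ^ 2 / 2 : ℝ)) := by
  set approx : ℕ → Ω → ℝ := dyadicSum (fun s ω => reflectionSign (fun t => Y t ω) s) W a b
  have happrox : ∀ n, ∫ ω, Z ω * (Circle.exp (c * approx n ω) : ℂ) ∂μ =
      (∫ ω, Z ω ∂μ) * Complex.exp (-((b - a) * c ^ 2 / 2 : ℝ)) := by
    intro n
    have hpos : ∀ i, 0 ≤ dyadicPoint a b n i := fun i => ha.trans (le_dyadicPoint hab n i)
    have hsum := hY.bm.integral_mul_exp_sum_sign_mul (hpos 0) (monotone_dyadicPoint hab n)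
      (fun i => hY.measurable_reflectionSign_of_le (hpos i) le_rfl)
      (fun i ω => abs_reflectionSign _ _) c (by rwa [dyadicPoint_zero]) hZ_le (2 ^ n)
    rwa [dyadicPoint_two_pow, dyadicPoint_zero] at hsum
  have hmeas : ∀ n, Measurable (approx n) := fun n => measurable_dyadicSum hab
    (fun s hs => (hY.measurable_reflectionSign_of_le (ha.trans hs.1) le_rfl).mono
      (hY.bm.le s) le_rfl) (fun s hs => hY.bm.measurable (ha.trans hs.1)) n
  refine tendsto_nhds_unique (tendsto_integral_of_dominated_convergence (fun _ => 1) (fun n => ?_)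
    (integrable_const 1) (fun n => .of_forall fun ω => ?_) ?_)
    (tendsto_const_nhds.congr fun n => (happrox n).symm)
  · exact ((hZ.mono (hY.bm.le a) le_rfl).mul
      (measurable_coe_circleExp.comp ((hmeas n).const_mul c))).aestronglyMeasurable
  · exact (norm_mul_circleExp _ _).trans_le (hZ_le ω)
  · filter_upwards [hY.ae_exists_isReflectedSolution] with ω ⟨w', f', h⟩
    rw [h.reflectedDriver_eq ha, h.reflectedDriver_eq (ha.trans hab)]
    have hlim := h.increments.tendsto_sum_sign_mul (abs_reflectionSign _) ha hab
    exact (((continuous_subtype_val.comp Circle.exp.continuous).tendsto _).comp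
      (hlim.const_mul c)).const_mul (Z ω)

lemma hasGaussianIncrements_reflectedDriver (hY : IsBangBang μ F κ y W Y) :
    HasGaussianIncrements μ F (reflectedDriver Y W) where
  le := hY.bm.le
  mono := hY.bm.mono
  adapted _ hu := hY.adapted_reflectedDriver hu
  init := by
    filter_upwards [hY.ae_exists_isReflectedSolution] with ω ⟨w', f', h⟩
    rw [h.reflectedDriver_eq le_rfl, h.isBangBangPath.driver_zero]
  integral_mul_exp _ _ ha hab c _ hZ hZ_le :=
    hY.integral_mul_exp_reflectedDriver ha hab c hZ hZ_le

end IsBangBang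

end ReflectedDriver

section CommonPreimages

variable {Ω E : Type*} {mΩ : MeasurableSpace Ω} [MeasurableSpace E] {μ : Measure Ω} {f g : Ω → E}

/-- The σ-algebra of the events which are, almost surely, the preimage of one and the same
measurable set under both `f` and `g`. -/
@[reducible]
def commonPreimages (μ : Measure Ω) (f g : Ω → E) : MeasurableSpace Ω where
  MeasurableSet' A := ∃ S : Set E, MeasurableSet S ∧ A =ᵐ[μ] f ⁻¹' S ∧ A =ᵐ[μ] g ⁻¹' S
  measurableSet_empty := ⟨∅, .empty, by simp, by simp⟩
  measurableSet_compl := fun _ ⟨S, hS, hf, hg⟩ => ⟨Sᶜ, hS.compl, hf.compl, hg.compl⟩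
  measurableSet_iUnion A hA := by
    choose S hS hf hg using hA
    refine ⟨⋃ i, S i, .iUnion hS, ?_, ?_⟩ <;> rw [preimage_iUnion]
    exacts [.countable_iUnion hf, .countable_iUnion hg]

lemma containsNullSets_commonPreimages (μ : Measure Ω) (f g : Ω → E) :
    ContainsNullSets μ (commonPreimages μ f g) := fun A hA => by
  refine ⟨∅, .empty, ?_, ?_⟩ <;> simpa using ae_eq_empty.mpr hA

lemma measurable_commonPreimages {φ : E → ℝ} (hφ : Measurable φ) {Z : Ω → ℝ}
    (hf : φ ∘ f =ᵐ[μ] Z) (hg : φ ∘ g =ᵐ[μ] Z) : Measurable[commonPreimages μ f g] Z :=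
  fun B hB => ⟨φ ⁻¹' B, hφ hB, hf.symm.preimage B, hg.symm.preimage B⟩

lemma ae_eq_preimage_of_measurableSet_commonPreimages (hf : Measurable f) (hg : Measurable g)
    (hfg : μ.map f = μ.map g) {A : Set Ω} (hA : MeasurableSet[commonPreimages μ f g] A) {S : Set E}
    (hS : MeasurableSet S) (hAS : A =ᵐ[μ] f ⁻¹' S) : A =ᵐ[μ] g ⁻¹' S := by
  obtain ⟨T, hT, hAf, hAg⟩ := hA
  have hset : MeasurableSet {x | T x = S x} := by
    simp only [eq_iff_iff]
    exact MeasurableSet.iff hT hS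
  have hTS : T =ᵐ[μ.map f] S := (ae_map_iff hf.aemeasurable hset).mpr (hAf.symm.trans hAS)
  rw [hfg] at hTS
  exact hAg.trans ((ae_map_iff hg.aemeasurable hset).mp hTS)

end CommonPreimages

section PathFunctionals

/-- The value at time `s` of the solution of the equation of `IsBangBangPath` driven by the path
`p`, as a functional of `p`. The upper limit of the Euler scheme makes it measurable. -/
def solutionMap (κ y s : ℝ) (p : NNReal → ℝ) : ℝ :=
  limsup (fun n : ℕ => eulerScheme κ y (s / 2 ^ n) (fun u => p u.toNNReal) (2 ^ n)) atTop

/-- The Riemann sum of `∫₀ˢ sgn(Y) dp`, where `Y` is the solution driven by the path `p`. -/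
def signSum (κ y s : ℝ) (n : ℕ) : (NNReal → ℝ) → ℝ :=
  dyadicSum (fun u p => psgn (solutionMap κ y u p)) (fun u p => p u.toNNReal) 0 s n

variable {κ y s : ℝ}

lemma measurable_solutionMap (κ y s : ℝ) : Measurable (solutionMap κ y s) :=
  Measurable.limsup fun _ => measurable_eulerScheme (W := fun u (p : NNReal → ℝ) => p u.toNNReal)
    fun _ _ => measurable_pi_apply _

lemma measurable_signSum (hs : 0 ≤ s) (n : ℕ) : Measurable (signSum κ y s n) :=
  measurable_dyadicSum hs (fun u _ => measurable_psgn.comp (measurable_solutionMap κ y u))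
    (fun _ _ => measurable_pi_apply _) n

namespace IsBangBangPath

variable {w f : ℝ → ℝ} {p : NNReal → ℝ}

lemma solutionMap_eq (h : IsBangBangPath κ y w f) (hκ : 0 ≤ κ) (hp : ∀ u : NNReal, p u = w u)
    (hs : 0 ≤ s) : solutionMap κ y s p = f s := by
  have hpath : IsBangBangPath κ y (fun u => p u.toNNReal) f :=
    { driver_zero := by rw [hp, Real.toNNReal_zero, NNReal.coe_zero, h.driver_zero]
      continuous := h.continuous
      eq := fun u hu => by rw [hp, Real.coe_toNNReal u hu, h.eq u hu] }
  exact (hpath.tendsto_eulerScheme hκ hs).limsup_eq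

lemma signSum_eq (h : IsBangBangPath κ y w f) (hκ : 0 ≤ κ) (hp : ∀ u : NNReal, p u = w u)
    (hs : 0 ≤ s) (n : ℕ) :
    signSum κ y s n p = ∑ i ∈ Finset.range (2 ^ n), psgn (f (dyadicPoint 0 s n i)) *
      (w (dyadicPoint 0 s n (i + 1)) - w (dyadicPoint 0 s n i)) := by
  have hpos : ∀ i, 0 ≤ dyadicPoint 0 s n i := le_dyadicPoint hs n
  simp only [signSum, dyadicSum, h.solutionMap_eq hκ hp (hpos _), hp, Real.coe_toNNReal _ (hpos _)]

end IsBangBangPath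

end PathFunctionals

section StrictInclusion

variable {Ω : Type*} {mΩ : MeasurableSpace Ω} {μ : Measure Ω} {F : ℝ → MeasurableSpace Ω}
  {κ y s t : ℝ} {W Y V : ℝ → Ω → ℝ}

/-- The trajectory of the process `U` on `[0, ∞)`. -/
def trajectory (U : ℝ → Ω → ℝ) (ω : Ω) : NNReal → ℝ := fun u => U u ω

lemma psgn_mul_of_abs_eq_one {e x : ℝ} (he : |e| = 1) (hx : x ≠ 0) :
    psgn (e * x) = e * psgn x := by
  rcases eq_or_eq_neg_of_abs_eq he with rfl | rfl
  · rw [one_mul, one_mul]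
  · rw [neg_one_mul, neg_one_mul, psgn_neg hx]

lemma IsBM.frequently_sub_mem (hW : IsBM μ F W) (hs : 0 ≤ s) (hst : s < t) {S : Set ℝ}
    (hS : MeasurableSet S) (hvol : volume S ≠ 0) : ∃ᵐ ω ∂μ, W t ω - W s ω ∈ S := by
  refine frequently_ae_iff.mpr fun hzero => hvol ?_
  refine gaussianReal_absolutelyContinuous' 0 (Real.toNNReal_pos.mpr (sub_pos.mpr hst)).ne' ?_
  rw [← hW.law s t hs hst.le, Measure.map_apply (hW.measurable_sub hs hst.le) hS]
  exact hzero

lemma IsReflectedSolution.tendsto_signSum_sub {ω : Ω} {w' f' : ℝ → ℝ}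
    (h : IsReflectedSolution κ y (fun t => W t ω) (fun t => Y t ω) w' f')
    (hpath : IsBangBangPath κ y (fun t => W t ω) (fun t => Y t ω)) (hκ : 0 ≤ κ) (hs : 0 ≤ s)
    (hne : ∀ n i, 0 < dyadicPoint 0 s n i → Y (dyadicPoint 0 s n i) ω ≠ 0) :
    Tendsto (fun n => signSum κ y s n (trajectory W ω) -
      signSum κ y s n (trajectory (reflectedDriver Y W) ω)) atTop (nhds 0) := by
  have hdriver : ∀ u : NNReal, trajectory (reflectedDriver Y W) ω u = w' u :=
    fun u => h.reflectedDriver_eq u.2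
  simp only [hpath.signSum_eq hκ (p := trajectory W ω) (fun _ => rfl) hs,
    h.isBangBangPath.signSum_eq hκ hdriver hs]
  refine h.increments.tendsto_sum_sub_sum h.continuous_driver (k := fun u => psgn (Y u ω))
    (k' := fun u => psgn (f' u)) (fun u => (abs_psgn _).le) hs fun n i hpos => ?_
  rw [h.eq_sign_mul _ hpos.le, psgn_mul_of_abs_eq_one (abs_reflectionSign _ _) (hne n i hpos)]

namespace IsBangBang

-- A large increment of `W` overcomes the drift and pushes `Y` across `0`.
lemma frequently_exists_eq_zero (hY : IsBangBang μ F κ y W Y) (ht : 0 < t) :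
    ∃ᵐ ω ∂μ, ∃ s ∈ Icc 0 t, Y s ω = 0 := by
  have hcross : ∀ᵐ ω ∂μ, 0 ∈ uIcc y (Y t ω) → ∃ s ∈ Icc 0 t, Y s ω = 0 := by
    filter_upwards [hY.path] with ω hpath hmem
    rw [← hpath.initial] at hmem
    rw [← uIcc_of_le ht.le]
    exact intermediate_value_uIcc hpath.continuous.continuousOn hmem
  have hdrift : ∀ᵐ ω ∂μ, |Y t ω - y - (W t ω - W 0 ω)| ≤ κ * t := by
    filter_upwards [hY.path] with ω hpath
    simpa [hpath.initial] using hpath.abs_sub_sub_le hY.drift_nonneg le_rfl ht.le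
  rcases le_total 0 y with hy | hy
  · have hlow := hY.bm.frequently_sub_mem le_rfl ht (S := Iio (-y - κ * t)) measurableSet_Iio
      (by simp)
    refine (hlow.and_eventually (hcross.and hdrift)).mono fun ω ⟨hW, hzero, hle⟩ => hzero ?_
    have hW : W t ω - W 0 ω < -y - κ * t := hW
    exact mem_uIcc_of_ge (by linarith [(abs_le.mp hle).2]) hy
  · have hhigh := hY.bm.frequently_sub_mem le_rfl ht (S := Ioi (-y + κ * t)) measurableSet_Ioi
      (by simp)
    refine (hhigh.and_eventually (hcross.and hdrift)).mono fun ω ⟨hW, hzero, hle⟩ => hzero ?_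
    have hW : -y + κ * t < W t ω - W 0 ω := hW
    exact mem_uIcc_of_le hy (by linarith [(abs_le.mp hle).1])

lemma solutionMap_trajectory_driver (hY : IsBangBang μ F κ y W Y) (hs : 0 ≤ s) :
    ∀ᵐ ω ∂μ, solutionMap κ y s (trajectory W ω) = Y s ω := by
  filter_upwards [hY.path] with ω hpath
  exact hpath.solutionMap_eq hY.drift_nonneg (fun _ => rfl) hs

variable [IsProbabilityMeasure μ]

lemma solutionMap_trajectory_reflectedDriver (hY : IsBangBang μ F κ y W Y) (hs : 0 ≤ s) :
    ∀ᵐ ω ∂μ, solutionMap κ y s (trajectory (reflectedDriver Y W) ω) =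
      reflectionSign (fun t => Y t ω) s * Y s ω := by
  filter_upwards [hY.ae_exists_isReflectedSolution] with ω ⟨w', f', h⟩
  rw [← h.eq_sign_mul s hs]
  exact h.isBangBangPath.solutionMap_eq hY.drift_nonneg (fun u => h.reflectedDriver_eq u.2) hs

-- The reflection changes the signs of `Y` and of the increments of `W` simultaneously.
lemma measurable_signIntegral_commonPreimages (hY : IsBangBang μ F κ y W Y)
    (hV : IsSI μ (fun s ω => psgn (Y s ω)) W V) (hs : 0 ≤ s) :
    Measurable[commonPreimages μ (trajectory W) (trajectory (reflectedDriver Y W))] (V s) := by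
  obtain ⟨ns, hns, hlim⟩ := (hV.2 s hs).exists_seq_tendsto_ae
  have hne : ∀ᵐ ω ∂μ, ∀ n i, 0 < dyadicPoint 0 s n i → Y (dyadicPoint 0 s n i) ω ≠ 0 :=
    ae_all_iff.mpr fun n => ae_all_iff.mpr fun i => eventually_imp_distrib_left.mpr hY.ae_ne_zero
  have hdriver : ∀ᵐ ω ∂μ, Tendsto (fun k => signSum κ y s (ns k) (trajectory W ω)) atTop
      (nhds (V s ω)) := by
    filter_upwards [hlim, hY.path] with ω hω hpath
    refine hω.congr fun k => ?_
    rw [rsum_eq_dyadicSum]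
    exact (hpath.signSum_eq hY.drift_nonneg (fun _ => rfl) hs (ns k)).symm
  have hreflected : ∀ᵐ ω ∂μ, Tendsto (fun k => signSum κ y s (ns k)
      (trajectory (reflectedDriver Y W) ω)) atTop (nhds (V s ω)) := by
    filter_upwards [hdriver, hne, hY.path, hY.ae_exists_isReflectedSolution]
      with ω hω hω_ne hpath ⟨w', f', h⟩
    simpa using hω.sub
      ((h.tendsto_signSum_sub hpath hY.drift_nonneg hs hω_ne).comp hns.tendsto_atTop)
  refine measurable_commonPreimages
    (Measurable.limsup fun k => measurable_signSum (κ := κ) (y := y) hs (ns k))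
    (hdriver.mono fun ω hω => ?_) (hreflected.mono fun ω hω => ?_)
  exacts [hω.limsup_eq, hω.limsup_eq]

lemma natFilt_signIntegral_le_commonPreimages (hY : IsBangBang μ F κ y W Y)
    (hV : IsSI μ (fun s ω => psgn (Y s ω)) W V) (t : ℝ) :
    natFilt μ V t ≤ commonPreimages μ (trajectory W) (trajectory (reflectedDriver Y W)) :=
  natFilt_le (containsNullSets_commonPreimages μ _ _) fun _ hs =>
    hY.measurable_signIntegral_commonPreimages hV hs.1

lemma not_measurable_signIntegral (hY : IsBangBang μ F κ y W Y)
    (hV : IsSI μ (fun s ω => psgn (Y s ω)) W V) (ht : 0 < t) :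
    ¬ Measurable[natFilt μ V t] (Y t) := by
  intro hmeas
  have hGauss := hY.hasGaussianIncrements_reflectedDriver
  have hpos : MeasurableSet {p | 0 < solutionMap κ y t p} :=
    measurableSet_lt measurable_const (measurable_solutionMap κ y t)
  have hsame : {ω | 0 < Y t ω} =ᵐ[μ]
      trajectory (reflectedDriver Y W) ⁻¹' {p | 0 < solutionMap κ y t p} := by
    refine ae_eq_preimage_of_measurableSet_commonPreimages (f := trajectory W)
      (measurable_pi_lambda _ hY.bm.hasGaussianIncrements.measurable)
      (measurable_pi_lambda _ hGauss.measurable) (hY.bm.hasGaussianIncrements.map_eq hGauss)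
      (hY.natFilt_signIntegral_le_commonPreimages hV t _ (hmeas measurableSet_Ioi)) hpos ?_
    filter_upwards [hY.solutionMap_trajectory_driver ht.le] with ω hω
    exact congrArg (0 < ·) hω.symm
  refine hY.frequently_exists_eq_zero ht ?_
  filter_upwards [hsame, hY.solutionMap_trajectory_reflectedDriver ht.le, hY.path,
    hY.ae_ne_zero ht] with ω hiff hω hpath hne ⟨s, hs, hzero⟩
  have hiff : 0 < Y t ω ↔ 0 < solutionMap κ y t (trajectory (reflectedDriver Y W) ω) :=
    iff_of_eq hiff
  rw [hω, reflectionSign_eq_neg_one hpath.continuous hs hzero, neg_one_mul, neg_pos] at hiff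
  rcases lt_or_gt_of_ne hne with hlt | hgt
  · exact lt_asymm hlt (hiff.mpr hlt)
  · exact lt_asymm hgt (hiff.mp hgt)

end IsBangBang

end StrictInclusion

section SumAndDifference

variable {Ω E E' : Type*} {mΩ : MeasurableSpace Ω} [MeasurableSpace E] [MeasurableSpace E']
  {μ : Measure Ω}

lemma natFilt_eq_of_ae_eq_sub_const {Ξ Ψ : ℝ → Ω → ℝ} {c : ℝ → ℝ}
    (hΞ : ∀ s, 0 ≤ s → Ξ s =ᵐ[μ] fun ω => Ψ s ω - c s) (t : ℝ) : natFilt μ Ξ t = natFilt μ Ψ t := by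
  refine le_antisymm (natFilt_le_natFilt (fun s hs => ?_) t)
    (natFilt_le_natFilt (fun s hs => ?_) t)
  · exact (containsNullSets_natFilt μ Ψ s).measurable_of_ae_eq
      ((measurable_natFilt μ Ψ ⟨hs, le_rfl⟩).sub_const (c s)) (hΞ s hs).symm
  · refine (containsNullSets_natFilt μ Ξ s).measurable_of_ae_eq
      ((measurable_natFilt μ Ξ ⟨hs, le_rfl⟩).add_const (c s)) ?_
    filter_upwards [hΞ s hs] with ω hω
    rw [hω, sub_add_cancel]

lemma natFilt_comp_le {φ : E → E'} (hφ : Measurable φ) (Z : ℝ → Ω → E) (t : ℝ) :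
    natFilt μ (fun s ω => φ (Z s ω)) t ≤ natFilt μ Z t :=
  natFilt_le_natFilt (fun _ hs => hφ.comp (measurable_natFilt μ Z ⟨hs, le_rfl⟩)) t

lemma natFilt_prodMk (Z : ℝ → Ω → E) (Z' : ℝ → Ω → E') (t : ℝ) :
    natFilt μ (fun s ω => (Z s ω, Z' s ω)) t = natFilt μ Z t ⊔ natFilt μ Z' t := by
  refine le_antisymm (natFilt_le (fun A hA => ?_) fun s hs => ?_) (sup_le ?_ ?_)
  · exact (le_sup_left : natFilt μ Z t ≤ _) A (containsNullSets_natFilt μ Z t A hA)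
  · exact ((measurable_natFilt μ Z hs).mono le_sup_left le_rfl).prodMk
      ((measurable_natFilt μ Z' hs).mono le_sup_right le_rfl)
  · exact natFilt_comp_le measurable_fst (fun s ω => (Z s ω, Z' s ω)) t
  · exact natFilt_comp_le measurable_snd (fun s ω => (Z s ω, Z' s ω)) t

lemma natFilt_prodMk_eq_add_sup_sub (X₁ X₂ : ℝ → Ω → ℝ) (t : ℝ) :
    natFilt μ (fun s ω => (X₁ s ω, X₂ s ω)) t =
      natFilt μ (fun s ω => X₁ s ω + X₂ s ω) t ⊔ natFilt μ (fun s ω => X₁ s ω - X₂ s ω) t := by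
  rw [← natFilt_prodMk]
  refine le_antisymm ?_ (natFilt_comp_le (φ := fun p : ℝ × ℝ => (p.1 + p.2, p.1 - p.2))
    (by fun_prop) (fun s ω => (X₁ s ω, X₂ s ω)) t)
  refine le_of_eq_of_le ?_ (natFilt_comp_le (φ := fun p : ℝ × ℝ =>
    ((p.1 + p.2) / 2, (p.1 - p.2) / 2)) (by fun_prop) _ t)
  simp

lemma natFilt_max_min_eq_add_sup_abs_sub (X₁ X₂ : ℝ → Ω → ℝ) (t : ℝ) :
    natFilt μ (fun s ω => (max (X₁ s ω) (X₂ s ω), min (X₁ s ω) (X₂ s ω))) t =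
      natFilt μ (fun s ω => X₁ s ω + X₂ s ω) t ⊔ natFilt μ (fun s ω => |X₁ s ω - X₂ s ω|) t := by
  rw [natFilt_prodMk_eq_add_sup_sub]
  simp only [max_add_min, max_sub_min_eq_abs']

end SumAndDifference

section DegenerateSystem

variable {Ω : Type*} {mΩ : MeasurableSpace Ω} {μ : Measure Ω} {F : ℝ → MeasurableSpace Ω}
  {g h x₁ x₂ : ℝ} {B₁ B₂ X₁ X₂ W V : ℝ → Ω → ℝ}

lemma integral_ite_le_eq {f₁ f₂ : ℝ → ℝ} (hf₁ : Continuous f₁) (hf₂ : Continuous f₂) (a b t : ℝ) :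
    ∫ s in (0 : ℝ)..t, (if f₁ s ≤ f₂ s then a else b) =
      (a + b) / 2 * t + (b - a) / 2 * ∫ s in (0 : ℝ)..t, psgn (f₁ s - f₂ s) := by
  have hite : ∀ s, (if f₁ s ≤ f₂ s then a else b) =
      (a + b) / 2 + (b - a) / 2 * psgn (f₁ s - f₂ s) := by
    intro s
    unfold psgn
    split_ifs <;> grind
  have hint : IntervalIntegrable (fun s => psgn (f₁ s - f₂ s)) volume 0 t :=
    intervalIntegrable_psgn (hf₁.sub hf₂) 0 t
  simp only [hite]
  rw [intervalIntegral.integral_add intervalIntegrable_const (hint.const_mul _),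
    intervalIntegral.integral_const_mul, intervalIntegral.integral_const, smul_eq_mul, sub_zero,
    mul_comm t]

namespace Solves11

variable {ρ σ : ℝ}

lemma isBangBang_sub (hsol : Solves11 μ F g h ρ σ x₁ x₂ B₁ B₂ X₁ X₂) (hgh : 0 ≤ g + h)
    (hW : IsBM μ F W) (hYeq : ∀ᵐ ω ∂μ, ∀ t : ℝ, 0 ≤ t → X₁ t ω - X₂ t ω =
      (x₁ - x₂) - (g + h) * (∫ s in (0 : ℝ)..t, psgn (X₁ s ω - X₂ s ω)) + W t ω) :
    IsBangBang μ F (g + h) (x₁ - x₂) W fun t ω => X₁ t ω - X₂ t ω where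
  bm := hW
  drift_nonneg := hgh
  adapted t ht := (measurable_fst.sub measurable_snd).comp
    (measurable_iff_comap_le.mpr (hsol.1 t ht))
  path := by
    filter_upwards [hW.init, hsol.2.1, hYeq] with ω hinit hcont heq
    exact ⟨hinit, hcont.1.sub hcont.2, heq⟩

-- Since `Y = X₁ - X₂`, comparing the two equations gives `W = I₁ - I₂`, while `V = I₁ + I₂`.
lemma signIntegral_ae_eq_add_sub [IsProbabilityMeasure μ]
    (hsol : Solves11 μ F g h 1 0 x₁ x₂ B₁ B₂ X₁ X₂) (hB₁ : IsBM μ F B₁) (hB₂ : IsBM μ F B₂)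
    (hY : IsBangBang μ F (g + h) (x₁ - x₂) W fun t ω => X₁ t ω - X₂ t ω)
    (hV : IsSI μ (fun s ω => psgn (X₁ s ω - X₂ s ω)) W V) {t : ℝ} (ht : 0 ≤ t) :
    V t =ᵐ[μ] fun ω => X₁ t ω + X₂ t ω - (x₁ + x₂ + (g - h) * t) := by
  obtain ⟨-, hcont, I₁, I₂, hI₁, hI₂, hX⟩ := hsol
  have hX' : ∀ᵐ ω ∂μ, ∀ t, 0 ≤ t → W t ω = I₁ t ω - I₂ t ω ∧
      X₁ t ω + X₂ t ω = x₁ + x₂ + (g - h) * t + (I₁ t ω + I₂ t ω) := by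
    filter_upwards [hX, hcont, hY.path] with ω hω hcont_ω hpath s hs
    have heq := hpath.eq s hs
    obtain ⟨h₁, h₂⟩ := hω s hs
    rw [integral_ite_le_eq hcont_ω.1 hcont_ω.2] at h₁ h₂
    constructor <;> linarith
  have hle : ∀ s ω, X₁ s ω ≤ X₂ s ω ↔ X₁ s ω - X₂ s ω ≤ 0 := fun s ω => sub_nonpos.symm
  simp only [hle] at hI₁ hI₂
  filter_upwards [hX', hY.signIntegral_ae_eq_add hB₁ hB₂ hV hI₁ hI₂
    (hX'.mono fun ω hω s hs => (hω s hs).1) ht] with ω hω hVI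
  rw [hVI, (hω t ht).2, add_sub_cancel_left]

end Solves11

lemma IsBangBang.natFilt_signIntegral_lt [IsProbabilityMeasure μ] {κ y : ℝ} {Y : ℝ → Ω → ℝ}
    (hY : IsBangBang μ F κ y W Y) (hV : IsSI μ (fun s ω => psgn (Y s ω)) W V) {t : ℝ}
    (ht : 0 < t) : natFilt μ V t < natFilt μ Y t :=
  lt_of_le_not_ge (hY.natFilt_signIntegral_le hV t) fun hle =>
    hY.not_measurable_signIntegral hV ht
      ((measurable_natFilt μ Y ⟨ht.le, le_rfl⟩).mono hle le_rfl)

end DegenerateSystem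

theorem degenerate_filtration_relations_general
    {g h : ℝ} (hgh : 0 ≤ g + h) {x₁ x₂ : ℝ}
    {Ω : Type*} [mΩ : MeasurableSpace Ω] {μ : Measure Ω} [IsProbabilityMeasure μ]
    {F : ℝ → MeasurableSpace Ω} {B₁ B₂ X₁ X₂ Y W V : ℝ → Ω → ℝ}
    (hB₁ : IsBM μ F B₁) (hB₂ : IsBM μ F B₂)
    (hsol : Solves11 μ F g h 1 0 x₁ x₂ B₁ B₂ X₁ X₂)
    (hYdef : ∀ t ω, Y t ω = X₁ t ω - X₂ t ω)
    (hW : IsBM μ F W)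
    (hYeq : ∀ᵐ ω ∂μ, ∀ t : ℝ, 0 ≤ t →
      Y t ω = (x₁ - x₂) - (g + h) * (∫ s in (0 : ℝ)..t, psgn (Y s ω)) + W t ω)
    (hV : IsSI μ (fun s ω => psgn (Y s ω)) W V) {t : ℝ} (ht : 0 < t) :
    natFilt μ (fun s ω => (max (X₁ s ω) (X₂ s ω), min (X₁ s ω) (X₂ s ω))) t = natFilt μ V t ∧
      natFilt μ V t = natFilt μ (fun s ω => X₁ s ω + X₂ s ω) t ∧
      natFilt μ V t < natFilt μ (fun s ω => (X₁ s ω, X₂ s ω)) t ∧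
      natFilt μ (fun s ω => (X₁ s ω, X₂ s ω)) t = natFilt μ Y t ∧
      natFilt μ Y t = natFilt μ (fun s ω => X₁ s ω - X₂ s ω) t ∧
      natFilt μ (fun s ω => X₁ s ω - X₂ s ω) t = natFilt μ W t := by
  obtain rfl : Y = fun s ω => X₁ s ω - X₂ s ω := funext₂ hYdef
  have hY := hsol.isBangBang_sub hgh hW hYeq
  have hVsum : ∀ s, 0 ≤ s → V s =ᵐ[μ] fun ω => X₁ s ω + X₂ s ω - (x₁ + x₂ + (g - h) * s) :=
    fun s hs => hsol.signIntegral_ae_eq_add_sub hB₁ hB₂ hY hV hs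
  have hcont : ∀ᵐ ω ∂μ, Continuous fun s => X₁ s ω + X₂ s ω - (x₁ + x₂ + (g - h) * s) := by
    filter_upwards [hsol.2.1] with ω ⟨h₁, h₂⟩
    fun_prop
  have hsum := natFilt_eq_of_ae_eq_sub_const hVsum t
  have hlt := hY.natFilt_signIntegral_lt hV ht
  have hpair : natFilt μ (fun s ω => (X₁ s ω, X₂ s ω)) t =
      natFilt μ (fun s ω => X₁ s ω - X₂ s ω) t := by
    rw [natFilt_prodMk_eq_add_sup_sub, ← hsum, sup_eq_right.mpr hlt.le]
  refine ⟨?_, hsum, hpair ▸ hlt, hpair, rfl, hY.natFilt_eq_driver t⟩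
  rw [natFilt_max_min_eq_add_sup_abs_sub, ← hsum,
    sup_eq_left.mpr (hY.natFilt_abs_le_signIntegral hV hcont hVsum t)]

/-- Proposition 1 of the paper. In the degenerate case `σ = 0, ρ = 1`
one has, for every `0 < t < ∞`,
`𝔉^{(R₁,R₂)}(t) = 𝔉^V(t) = 𝔉^{X₁+X₂}(t) ⊊ 𝔉^{(X₁,X₂)}(t) = 𝔉^Y(t) = 𝔉^{X₁−X₂}(t) = 𝔉^W(t)`,
where the inclusion is strict. -/
theorem degenerate_filtration_relations
    (g h : ℝ) (hg : 0 ≤ g) (hh : 0 ≤ h) (hgh : 0 < g + h) (x₁ x₂ : ℝ)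
    {Ω : Type*} [mΩ : MeasurableSpace Ω] (μ : Measure Ω) [IsProbabilityMeasure μ]
    (F : ℝ → MeasurableSpace Ω) (B₁ B₂ X₁ X₂ Y W V : ℝ → Ω → ℝ)
    (hBM : IsPlanarBM μ F B₁ B₂)
    (hsol : Solves11 μ F g h 1 0 x₁ x₂ B₁ B₂ X₁ X₂)
    (hYdef : ∀ t ω, Y t ω = X₁ t ω - X₂ t ω)
    (hW : IsBM μ F W)
    (hYeq : ∀ᵐ ω ∂μ, ∀ t : ℝ, 0 ≤ t →
      Y t ω = (x₁ - x₂) - (g + h) * (∫ s in (0:ℝ)..t, psgn (Y s ω)) + W t ω)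
    (hV : IsSI μ (fun s ω => psgn (Y s ω)) W V) :
    ∀ t : ℝ, 0 < t →
      natFilt μ (fun s ω => (max (X₁ s ω) (X₂ s ω), min (X₁ s ω) (X₂ s ω))) t =
          natFilt μ V t ∧
      natFilt μ V t = natFilt μ (fun s ω => X₁ s ω + X₂ s ω) t ∧
      natFilt μ V t < natFilt μ (fun s ω => (X₁ s ω, X₂ s ω)) t ∧
      natFilt μ (fun s ω => (X₁ s ω, X₂ s ω)) t = natFilt μ Y t ∧
      natFilt μ Y t = natFilt μ (fun s ω => X₁ s ω - X₂ s ω) t ∧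
      natFilt μ (fun s ω => X₁ s ω - X₂ s ω) t = natFilt μ W t := by
  exact fun _ => degenerate_filtration_relations_general hgh.le hBM.1 hBM.2.1 hsol hYdef hW hYeq hV

end SDEPaper
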